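/- arXiv:2211.15818 — 2 statements merged into one kernel-verified Lean document; each statement's English description precedes it below -/
import Mathlib

section
/- Let G be a finite pseudo-solvable group and let p be a prime with p ∉ {2,3,5} such that p, 3, and 5 all divide |G| and G has no element of order 3p, no element of order 5p, and no element of order 15 (so {p,3,5} forms a triangle in the complement of the prime graph of G). Let r be a prime dividing |G| with r ∉ {3,5}. If G has no element of order 3r, then G has no element of order 5r. -/
/-- A finite group is *pseudo-solvable* if it has a subnormal series whose factors are
all cyclic or isomorphic to the alternating group `A₅`. -/
def IsPseudoSolvable (G : Type*) [Group G] : Prop :=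
  ∃ (n : ℕ) (H : Fin (n + 1) → Subgroup G),
    H 0 = ⊥ ∧ H (Fin.last n) = ⊤ ∧
    ∀ i : Fin n, H i.castSucc ≤ H i.succ ∧
      ∃ hN : ((H i.castSucc).subgroupOf (H i.succ)).Normal,
        haveI := hN
        IsCyclic (H i.succ ⧸ (H i.castSucc).subgroupOf (H i.succ)) ∨
        Nonempty ((H i.succ ⧸ (H i.castSucc).subgroupOf (H i.succ)) ≃* alternatingGroup (Fin 5))
section A5part
open Equiv
set_option maxRecDepth 100000

def xC5 : Perm (Fin 5) := finRotate 5
def xB3 : Perm (Fin 5) := c[0,3,2]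

theorem x_pow_ten : ∀ σ : Perm (Fin 5), σ^10 = 1 → σ^2 = 1 ∨ σ^5=1 := by decide

theorem x_b_conj : ∀ b : Perm (Fin 5), b^3 = 1 → (xC5*b)^2 = 1 → b ≠ 1 →
    ∃ i : Fin 5, b = xC5^(i:ℕ) * xB3 * (xC5^(i:ℕ))⁻¹ := by decide

theorem x_centr : ∀ s : Perm (Fin 5), s * xC5 = xC5 * s → s * xB3 = xB3 * s → s = 1 := by decide

theorem xC5_mem : xC5 ∈ alternatingGroup (Fin 5) := by rw [Perm.mem_alternatingGroup]; decide
theorem xB3_mem : xB3 ∈ alternatingGroup (Fin 5) := by rw [Perm.mem_alternatingGroup]; decide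

theorem x_gen (H : Subgroup (Perm (Fin 5))) (hc : xC5 ∈ H) (hb : xB3 ∈ H) :
    alternatingGroup (Fin 5) ≤ H := by
  have hb3 : xB3.IsThreeCycle := by
    rw [← card_support_eq_three_iff]; decide
  have key : ∀ i j : Fin 5, ∃ k : Fin 5, (xC5 ^ (k:ℕ)) i = j := by decide
  have : MulAction.IsPretransitive H (Fin 5) := ⟨fun i j => by
    obtain ⟨k, hk⟩ := key i j
    exact ⟨⟨xC5 ^ (k:ℕ), H.pow_mem hc _⟩, hk⟩⟩
  have : MulAction.IsPreprimitive H (Fin 5) :=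
    MulAction.IsPreprimitive.of_prime_card (by simp; norm_num)
  exact Perm.alternatingGroup_le_of_isPreprimitive_of_isThreeCycle_mem this hb3 hb

theorem x_aut_inj : Function.Injective
    (MulAut.conjNormal : Perm (Fin 5) →* MulAut (alternatingGroup (Fin 5))) := by
  rw [injective_iff_map_eq_one]
  intro s hs
  have h : ∀ a : alternatingGroup (Fin 5), s * (a : Perm (Fin 5)) = a * s := by
    intro a
    have := congrArg (fun f : MulAut (alternatingGroup (Fin 5)) => ((f a : alternatingGroup (Fin 5)) : Perm (Fin 5))) hs
    simp only [MulAut.conjNormal_apply, MulAut.one_apply] at this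
    exact mul_inv_eq_iff_eq_mul.mp this
  exact x_centr s (h ⟨_, xC5_mem⟩) (h ⟨_, xB3_mem⟩)

theorem x_conj5 (g : Perm (Fin 5)) (hg : g ^ 5 = 1) (h1 : g ≠ 1) : ∃ s, s * g * s⁻¹ = xC5 := by
  have h5 : Fact (Nat.Prime 5) := ⟨by norm_num⟩
  have : orderOf g = 5 := orderOf_eq_prime hg h1
  have hh : IsConj g xC5 := by
    rw [Perm.isConj_iff_cycleType_eq]
    obtain ⟨n, hn⟩ := Perm.cycleType_prime_order (σ := g) (by rw [this]; norm_num)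
    have hs := g.sum_cycleType
    have hle : g.support.card ≤ 5 := by simpa using Finset.card_le_univ g.support
    rw [this] at hn
    rw [hn] at hs
    simp at hs
    have : n = 0 := by omega
    subst this
    rw [hn, xC5, cycleType_finRotate]; rfl
  rw [isConj_iff] at hh
  exact hh

theorem x_aut_surj : Function.Surjective
    (MulAut.conjNormal : Perm (Fin 5) →* MulAut (alternatingGroup (Fin 5))) := by
  have step3 : ∀ θ : MulAut (alternatingGroup (Fin 5)), θ ⟨_, xC5_mem⟩ = ⟨_, xC5_mem⟩ →
      θ ⟨_, xB3_mem⟩ = ⟨_, xB3_mem⟩ → θ = 1 := by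
    intro θ h1 h2
    have := x_gen ((MonoidHom.eqLocus θ.toMonoidHom (MonoidHom.id _)).map (alternatingGroup (Fin 5)).subtype)
      ⟨⟨_, xC5_mem⟩, h1, rfl⟩ ⟨⟨_, xB3_mem⟩, h2, rfl⟩
    ext1 a
    obtain ⟨b, hb, hab⟩ := this a.2
    have : b = a := Subtype.ext hab
    subst this
    exact hb
  have step2 : ∀ θ : MulAut (alternatingGroup (Fin 5)), θ ⟨_, xC5_mem⟩ = ⟨_, xC5_mem⟩ →
      ∃ s : Perm (Fin 5), MulAut.conjNormal s = θ := by
    intro θ h1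
    obtain ⟨i, hi⟩ := x_b_conj (θ ⟨_, xB3_mem⟩ : alternatingGroup (Fin 5))
      (by
        have : (⟨_, xB3_mem⟩ : alternatingGroup (Fin 5)) ^ 3 = 1 := by
          apply Subtype.ext; simp only [Subgroup.coe_pow]; decide
        rw [← Subgroup.coe_pow, ← map_pow, this]; simp)
      (by
        have : ((⟨_, xC5_mem⟩ : alternatingGroup (Fin 5)) * ⟨_, xB3_mem⟩) ^ 2 = 1 := by
          apply Subtype.ext; simp only [Subgroup.coe_pow, Subgroup.coe_mul]; decide
        have h2 := congrArg θ this
        rw [map_pow, map_mul, h1, map_one] at h2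
        exact congrArg Subtype.val h2)
      (by
        intro h
        have h2 : θ ⟨_, xB3_mem⟩ = 1 := Subtype.ext h
        rw [map_eq_one_iff θ θ.injective] at h2
        have := congrArg Subtype.val h2
        revert this
        simp only
        decide)
    refine ⟨xC5 ^ (i:ℕ), ?_⟩
    rw [← inv_mul_eq_one]
    apply step3
    · rw [MulAut.mul_apply, h1, ← map_inv]
      apply Subtype.ext
      rw [MulAut.conjNormal_apply]
      simp only
      group
    · rw [MulAut.mul_apply, ← map_inv]
      apply Subtype.ext
      rw [MulAut.conjNormal_apply, hi]
      group
  intro θ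
  obtain ⟨s, hs⟩ := x_conj5 (θ ⟨_, xC5_mem⟩ : alternatingGroup (Fin 5))
      (by
        have : (⟨_, xC5_mem⟩ : alternatingGroup (Fin 5)) ^ 5 = 1 := by
          apply Subtype.ext; simp only [Subgroup.coe_pow]; decide
        rw [← Subgroup.coe_pow, ← map_pow, this]; simp)
      (by
        intro h
        have h2 : θ ⟨_, xC5_mem⟩ = 1 := Subtype.ext h
        rw [map_eq_one_iff θ θ.injective] at h2
        have := congrArg Subtype.val h2
        revert this
        simp only
        decide)
  obtain ⟨u, hu⟩ := step2 (MulAut.conjNormal s * θ) (by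
    apply Subtype.ext
    rw [MulAut.mul_apply, MulAut.conjNormal_apply]; exact hs)
  refine ⟨s⁻¹ * u, ?_⟩
  rw [map_mul, hu, map_inv]; simp

noncomputable def xAut : Perm (Fin 5) ≃* MulAut (alternatingGroup (Fin 5)) :=
  MulEquiv.ofBijective _ ⟨x_aut_inj, x_aut_surj⟩

theorem xAut_apply (s : Perm (Fin 5)) : xAut s = MulAut.conjNormal s := rfl
theorem x_ord5 : orderOf xC5 = 5 :=
  have : Fact (Nat.Prime 5) := ⟨by norm_num⟩
  orderOf_eq_prime (by decide) (by decide)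
theorem x_ord3 : orderOf xB3 = 3 :=
  have : Fact (Nat.Prime 3) := ⟨by norm_num⟩
  orderOf_eq_prime (by decide) (by decide)
end A5part
section Part2
universe u
set_option linter.unusedSectionVars false
set_option linter.style.haveILetI false
variable {G : Type u} [Group G] [Finite G]

theorem x_ord_dvd {g : G} {n : ℕ} (h : n ∣ orderOf g) : ∃ x : G, orderOf x = n :=
  ⟨_, orderOf_pow_orderOf_div (orderOf_pos g).ne' h⟩

theorem x_comm_order {x y : G} {a b : ℕ} (ha : a.Prime) (hb : b.Prime) (hab : a ≠ b)
    (hx : a ∣ orderOf x) (hy : b ∣ orderOf y) (h : x * y = y * x) : ∃ g : G, orderOf g = a * b := by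
  have hx' := orderOf_pow_orderOf_div (orderOf_pos x).ne' hx
  have hy' := orderOf_pow_orderOf_div (orderOf_pos y).ne' hy
  have hc : Commute (x ^ (orderOf x / a)) (y ^ (orderOf y / b)) := Commute.pow_pow h _ _
  refine ⟨_, (hc.orderOf_mul_eq_mul_orderOf_of_coprime ?_).trans (by rw [hx', hy'])⟩
  rw [hx', hy']
  exact (Nat.coprime_primes ha hb).2 hab

theorem x_quot {V : Subgroup G} [V.Normal] {n : ℕ} (h : ¬ ∃ g : G, orderOf g = n) :
    ¬ ∃ g : G ⧸ V, orderOf g = n := by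
  rintro ⟨g, hg⟩
  obtain ⟨g, rfl⟩ := QuotientGroup.mk'_surjective V g
  exact h (x_ord_dvd (g := g) (hg ▸ orderOf_map_dvd _ g))

/-- prime order divides in a p-group -/
theorem x_pgroup {V : Subgroup G} {a : ℕ} (ha : a.Prime) (hV : IsPGroup a V) {v : G} (hv : v ∈ V)
    (h1 : v ≠ 1) : a ∣ orderOf v := by
  have := Fact.mk ha
  obtain ⟨k, hk⟩ := IsPGroup.iff_orderOf.1 hV ⟨v, hv⟩
  rw [Subgroup.orderOf_mk] at hk
  rcases k with _ | k
  · simp at hk; exact absurd hk h1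
  · rw [hk, pow_succ]; exact dvd_mul_left _ _

/-- conjugation action on the additive version of an abelian normal subgroup -/
theorem x_action (V : Subgroup G) (hV : V.Normal) (hc : ∀ x ∈ V, ∀ y ∈ V, x * y = y * x) :
    ∃ (A : Type u) (_ : AddCommGroup A) (ρ : G →* AddMonoid.End A) (ι : A → G),
      Function.Injective ι ∧ (∀ u, ι u ∈ V) ∧ (∀ v ∈ V, ∃ u, ι u = v) ∧ ι 0 = 1 ∧
      (∀ u w, ι (u + w) = ι u * ι w) ∧ (∀ g u, ι (ρ g u) = g * ι u * g⁻¹) := by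
  letI : CommGroup V := { (inferInstance : Group V) with
    mul_comm := fun x y => Subtype.ext (hc x x.2 y y.2) }
  refine ⟨Additive V, inferInstance,
    { toFun := fun g =>
        { toFun := fun u => Additive.ofMul (⟨g * (Additive.toMul u : V) * g⁻¹,
            hV.conj_mem _ (Additive.toMul u).2 g⟩ : V)
          map_zero' := ?_
          map_add' := ?_ }
      map_one' := ?_
      map_mul' := ?_ }, fun u => ((Additive.toMul u : V) : G), ?_, ?_, ?_, ?_, ?_, ?_⟩
  · apply congrArg Additive.ofMul
    apply Subtype.ext
    change g * (1:G) * g⁻¹ = 1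
    group
  · intro x y
    apply congrArg Additive.ofMul (a₁ := _) (a₂ := _)
    apply Subtype.ext
    change g * ((x.toMul : V) * (y.toMul : V) : G) * g⁻¹ = g * (x.toMul : V) * g⁻¹ * (g * (y.toMul : V) * g⁻¹)
    group
  · ext u
    change 1 * (u.toMul : G) * 1⁻¹ = (u.toMul : G)
    group
  · intro g h
    ext u
    change (g * h) * (u.toMul : G) * (g*h)⁻¹ = g * (h * u.toMul * h⁻¹) * g⁻¹
    group
  · exact Subtype.val_injective
  · intro u; exact (Additive.toMul u).2
  · intro v hv; exact ⟨Additive.ofMul ⟨v, hv⟩, rfl⟩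
  · rfl
  · intro u w; rfl
  · intro g u; rfl

theorem x_rho {A : Type*} [AddCommGroup A] (ρ : G →* AddMonoid.End A) (g h : G) (u : A) :
    ρ g (ρ h u) = ρ (g * h) u := by rw [map_mul]; rfl

theorem x_norm_zero {A : Type*} [AddCommGroup A] (ρ : G →* AddMonoid.End A) (g : G) (n : ℕ)
    (hn : g ^ n = 1) (hf : ∀ u, ρ g u = u → u = 0) (u : A) :
    ∑ i ∈ Finset.range n, ρ (g ^ i) u = 0 := by
  apply hf
  have h1 := Finset.sum_range_succ (fun i => ρ (g ^ i) u) n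
  have h2 := Finset.sum_range_succ' (fun i => ρ (g ^ i) u) n
  rw [h1] at h2
  simp only [hn, pow_zero, add_left_inj] at h2
  rw [map_sum, h2]
  refine Finset.sum_congr rfl fun i _ => ?_
  rw [pow_succ', map_mul]; rfl

theorem x_K_abs {A : Type*} [AddCommGroup A] (ρ : G →* AddMonoid.End A) (E : Subgroup G) (t : G)
    (n : ℕ) (hn : t ^ n = 1) (hn0 : 0 < n) (htE : ∀ e ∈ E, t * e * t⁻¹ ∈ E)
    (hfe : ∃ e ∈ E, ∀ u, ρ e u = u → u = 0) (hft : ∀ u, ρ t u = u → u = 0)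
    (hfpf : ∀ i, 0 < i → i < n → ∀ e ∈ E, e * t ^ i = t ^ i * e → e = 1) (u : A) :
    Nat.card E • u = 0 := by
  classical
  have := Fintype.ofFinite E
  obtain ⟨e0, he0, hfe⟩ := hfe
  have htE' : ∀ i, ∀ e ∈ E, t ^ i * e * (t ^ i)⁻¹ ∈ E := by
    intro i
    induction i with
    | zero => intro e he; simpa using he
    | succ i ih =>
      intro e he
      have := htE _ (ih e he)
      convert this using 1
      rw [pow_succ']; group
  have hE0 : ∀ w : A, ∑ e : E, ρ (e : G) w = 0 := by
    intro w
    apply hfe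
    rw [map_sum]
    refine Fintype.sum_equiv (Equiv.mulLeft (⟨e0, he0⟩ : E)) _ _ fun e => ?_
    simp [map_mul]
  have h0 : ∑ e : E, ∑ i ∈ Finset.range n, ρ ((e : G) * t ^ i * (e : G)⁻¹) u = 0 := by
    refine Finset.sum_eq_zero fun e _ => ?_
    have := x_norm_zero ρ ((e : G) * t * (e : G)⁻¹) n (by rw [conj_pow, hn]; group) ?_ u
    · simpa [conj_pow] using this
    · intro w hw
      have h1 : ρ t (ρ (e:G)⁻¹ w) = ρ (e:G)⁻¹ w := by
        rw [x_rho]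
        have h2 := congrArg (ρ (e:G)⁻¹) hw
        rw [x_rho] at h2
        rw [← h2]; congr 2; group
      have h2 := congrArg (ρ (e:G)) (hft _ h1)
      rw [x_rho] at h2
      simpa using h2
  rw [Finset.sum_comm] at h0
  obtain ⟨m, rfl⟩ : ∃ m, n = m + 1 := ⟨n - 1, by omega⟩
  rw [Finset.sum_range_succ', Finset.sum_eq_zero, zero_add] at h0
  · simpa using h0
  · intro i hi
    rw [Finset.mem_range] at hi
    let f : E → E := fun e => ⟨e * (t ^ (i+1) * (e:G)⁻¹ * (t ^ (i+1))⁻¹),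
      E.mul_mem e.2 (htE' _ _ (E.inv_mem e.2))⟩
    have hf : Function.Injective f := by
      intro e e' h
      have h1 : (e:G) * (t ^ (i+1) * (e:G)⁻¹ * (t ^ (i+1))⁻¹) = e' * (t ^ (i+1) * (e':G)⁻¹ * (t ^ (i+1))⁻¹) :=
        congrArg Subtype.val h
      have h2 := hfpf (i+1) (by omega) (by omega) ((e':G)⁻¹ * e) (E.mul_mem (E.inv_mem e'.2) e.2) (by
        have h3 : (e:G) * t ^ (i+1) * (e:G)⁻¹ = e' * t ^ (i+1) * (e':G)⁻¹ := by
          have := congrArg (· * t ^ (i+1)) h1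
          simpa [mul_assoc] using this
        have h4 : (e:G) * t ^ (i+1) = e' * t ^ (i+1) * (e':G)⁻¹ * e := by rw [← h3]; group
        rw [mul_assoc, h4]; group)
      apply Subtype.ext
      exact (inv_mul_eq_one.1 h2).symm
    have hb : Function.Bijective f := Finite.injective_iff_bijective.1 hf
    rw [← hE0 (ρ (t ^ (i+1)) u)]
    refine Fintype.sum_bijective f hb _ _ fun e => ?_
    rw [x_rho]
    congr 2
    simp [f, mul_assoc]

theorem x_K {a b c : ℕ} (ha : a.Prime) (hb : b.Prime) (hc : c.Prime) (hab : a ≠ b) (hac : a ≠ c)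
    (hbc : b ≠ c) (nab : ¬ ∃ g : G, orderOf g = a * b) (nac : ¬ ∃ g : G, orderOf g = a * c)
    (nbc : ¬ ∃ g : G, orderOf g = b * c)
    (V : Subgroup G) (hV : V.Normal) (hVc : ∀ x ∈ V, ∀ y ∈ V, x * y = y * x) (hVp : IsPGroup a V)
    (hV1 : V ≠ ⊥) (E : Subgroup G) (hE : IsPGroup b E) (hE1 : E ≠ ⊥) (t : G) (ht : orderOf t = c)
    (htE : ∀ e ∈ E, t * e * t⁻¹ ∈ E) : False := by
  obtain ⟨A, _, ρ, ι, hι, hιV, hVι, hι0, hιa, hιρ⟩ := x_action V hV hVc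
  have hfix : ∀ g u, ρ g u = u → g * ι u = ι u * g := by
    intro g u h
    have := hιρ g u
    rw [h] at this
    nth_rewrite 2 [this]; group
  have hne : ∀ u, u ≠ 0 → a ∣ orderOf (ι u) := fun u hu =>
    x_pgroup ha hVp (hιV u) (fun h => hu (hι (h.trans hι0.symm)))
  obtain ⟨v, hv, hv1⟩ := V.bot_or_exists_ne_one.resolve_left hV1
  obtain ⟨e, he, he1⟩ := E.bot_or_exists_ne_one.resolve_left hE1
  obtain ⟨u, rfl⟩ := hVι v hv
  have key := x_K_abs ρ E t c (ht ▸ pow_orderOf_eq_one t) hc.pos htE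
    ⟨e, he, fun u hu => by
      by_contra h0
      exact nab (x_comm_order ha hb hab (hne u h0) (x_pgroup hb hE he he1) (hfix _ _ hu).symm)⟩
    (fun u hu => by
      by_contra h0
      exact nac (x_comm_order ha hc hac (hne u h0) (by rw [ht]) (hfix _ _ hu).symm))
    (fun i hi0 hi e he hcom => by
      by_contra h0
      refine nbc (x_comm_order hb hc hbc (x_pgroup hb hE he h0) ?_ hcom)
      rw [orderOf_pow, ht, Nat.Coprime.gcd_eq_one, Nat.div_one]
      exact (Nat.Prime.coprime_iff_not_dvd hc).2 (Nat.not_dvd_of_pos_of_lt hi0 hi)) u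
  have hpow : ∀ n : ℕ, ι (n • u) = ι u ^ n := by
    intro n
    induction n with
    | zero => simpa using hι0
    | succ n ih => rw [succ_nsmul, hιa, ih, pow_succ]
  have h1 : ι u ^ Nat.card E = 1 := by rw [← hpow, key, hι0]
  have h2 : a ∣ Nat.card E := (x_pgroup ha hVp hv hv1).trans (orderOf_dvd_of_pow_eq_one h1)
  have := Fact.mk hb
  obtain ⟨k, hk⟩ := IsPGroup.iff_card.1 hE
  rw [hk] at h2
  exact hab ((Nat.prime_dvd_prime_iff_eq ha hb).1 (ha.dvd_of_dvd_pow h2))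

theorem x_frattini (N : Subgroup G) [N.Normal] {b c : ℕ} (hb : b.Prime) (hc : c.Prime)
    (hbN : b ∣ Nat.card N) (hcN : c ∣ N.index) :
    ∃ (E : Subgroup G) (t : G), IsPGroup b E ∧ E ≠ ⊥ ∧ orderOf t = c ∧ ∀ e ∈ E, t * e * t⁻¹ ∈ E := by
  have := Fact.mk hb
  have := Fact.mk hc
  obtain ⟨P⟩ : Nonempty (Sylow b N) := inferInstance
  have hf := P.normalizer_sup_eq_top
  set E := Subgroup.map N.subtype (P : Subgroup N) with hE
  set M := Subgroup.normalizer (E : Set G) with hM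
  have h1 : c ∣ Nat.card M := by
    have h2 := Subgroup.relIndex_sup_right M N
    rw [hf, Subgroup.relIndex_top_right] at h2
    rw [h2] at hcN
    exact hcN.trans (Subgroup.relIndex_dvd_card _ _)
  obtain ⟨t, ht⟩ := exists_prime_orderOf_dvd_card' c h1
  refine ⟨E, t, P.2.map _, ?_, by simpa using ht, ?_⟩
  · intro h
    rw [Subgroup.map_eq_bot_iff_of_injective _ N.subtype_injective] at h
    exact P.ne_bot_of_dvd_card hbN h
  · intro e he
    exact (Subgroup.mem_normalizer_iff.1 t.2 e).1 he

theorem x_H [hs : Group.IsSolvable G] {q s : ℕ} (hq : q.Prime) (hss : s.Prime) (hqs : q ≠ s)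
    (dq : q ∣ Nat.card G) (ds : s ∣ Nat.card G) (n : ¬ ∃ g : G, orderOf g = q * s) :
    ∃ (E : Subgroup G) (t : G), E ≠ ⊥ ∧ (∀ e ∈ E, t * e * t⁻¹ ∈ E) ∧
     ((IsPGroup q E ∧ orderOf t = s) ∨ (IsPGroup s E ∧ orderOf t = q)) := by
  have hex : ∃ k, ∃ X : Subgroup G, X.Normal ∧ Nat.card X = k ∧ (q ∣ Nat.card X ∨ s ∣ Nat.card X) :=
    ⟨_, ⊤, inferInstance, rfl, Or.inl (by simpa using dq)⟩
  classical
  obtain ⟨X, hX, hXk, hXd⟩ := Nat.find_spec hex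
  have hmin := fun k => Nat.find_min hex (m := k)
  rw [← hXk] at hmin
  have hnb : ¬ (q ∣ Nat.card X ∧ s ∣ Nat.card X) := by
    rintro ⟨h1, h2⟩
    have hXn : Nontrivial X := by
      rw [← Finite.one_lt_card_iff_nontrivial]
      exact lt_of_lt_of_le hq.one_lt (Nat.le_of_dvd Nat.card_pos h1)
    have hlt := Group.IsSolvable.commutator_lt_top_of_nontrivial X
    have hcard : Nat.card (commutator X) < Nat.card X := by
      refine lt_of_le_of_ne (Subgroup.card_le_card_group _) fun h => hlt.ne ?_
      exact Subgroup.eq_top_of_card_eq _ h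
    have hmap : Nat.card ((commutator X).map X.subtype) = Nat.card (commutator X) :=
      Subgroup.card_map_of_injective X.subtype_injective
    have hno : ¬ (q ∣ Nat.card (commutator X) ∨ s ∣ Nat.card (commutator X)) := by
      intro h
      exact hmin _ hcard ⟨(commutator X).map X.subtype, inferInstance, hmap, by rwa [hmap]⟩
    push Not at hno
    have hci := Subgroup.card_mul_index (commutator X)
    have dq' : q ∣ Nat.card (X ⧸ commutator X) := by
      rw [← hci] at h1; exact (hq.dvd_mul.1 h1).resolve_left hno.1
    have ds' : s ∣ Nat.card (X ⧸ commutator X) := by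
      rw [← hci] at h2; exact (hss.dvd_mul.1 h2).resolve_left hno.2
    have := Fact.mk hq
    have := Fact.mk hss
    obtain ⟨x, hx⟩ := exists_prime_orderOf_dvd_card' q dq'
    obtain ⟨y, hy⟩ := exists_prime_orderOf_dvd_card' s ds'
    have hxy : x * y = y * x := mul_comm (G := Abelianization X) x y
    have nX : ¬ ∃ g : X, orderOf g = q * s := by
      rintro ⟨g, hg⟩; exact n ⟨g, by simpa using hg⟩
    exact x_quot nX (x_comm_order hq hss hqs (by rw [hx]) (by rw [hy]) hxy)
  have hci := Subgroup.card_mul_index X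
  rcases hXd with h | h
  · have h' : ¬ s ∣ Nat.card X := fun h2 => hnb ⟨h, h2⟩
    rw [← hci] at ds
    obtain ⟨E, t, h1, h2, h3, h4⟩ := x_frattini X hq hss h ((hss.dvd_mul.1 ds).resolve_left h')
    exact ⟨E, t, h2, h4, Or.inl ⟨h1, h3⟩⟩
  · have h' : ¬ q ∣ Nat.card X := fun h2 => hnb ⟨h2, h⟩
    rw [← hci] at dq
    obtain ⟨E, t, h1, h2, h3, h4⟩ := x_frattini X hss hq h ((hq.dvd_mul.1 dq).resolve_left h')
    exact ⟨E, t, h2, h4, Or.inr ⟨h1, h3⟩⟩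

/-- abelian normal `ℓ`-subgroup inside a nontrivial solvable normal subgroup -/
theorem x_M (N : Subgroup G) [hN : N.Normal] [hs : Group.IsSolvable N] (h1 : N ≠ ⊥) :
    ∃ (l : ℕ) (V : Subgroup G), l.Prime ∧ V.Normal ∧ V ≤ N ∧ V ≠ ⊥ ∧ IsPGroup l V ∧
      (∀ x ∈ V, ∀ y ∈ V, x * y = y * x) := by
  have hD : ∃ D : Subgroup G, D.Normal ∧ D ≤ N ∧ D ≠ ⊥ ∧ (∀ x ∈ D, ∀ y ∈ D, x * y = y * x) := by
    have hex := hs.solvable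
    classical
    set m := Nat.find hex with hm
    have hspec := Nat.find_spec hex
    rw [← hm] at hspec
    rcases hmm : m with _ | k
    · rw [hmm] at hspec
      simp at hspec
      exfalso
      apply h1
      have h2 : (⊤ : Subgroup N).map N.subtype = ⊥ := by rw [hspec]; simp
      rwa [← MonoidHom.range_eq_map, Subgroup.range_subtype] at h2
    · have hk := Nat.find_min hex (m := k) (by omega)
      rw [hmm, derivedSeries_succ] at hspec
      refine ⟨(derivedSeries N k).map N.subtype, inferInstance, Subgroup.map_subtype_le _, ?_, ?_⟩
      · rwa [Ne, Subgroup.map_eq_bot_iff_of_injective _ N.subtype_injective]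
      · rintro _ ⟨x, hx, rfl⟩ _ ⟨y, hy, rfl⟩
        have h3 := Subgroup.commutator_mem_commutator hx hy
        rw [hspec, Subgroup.mem_bot, commutatorElement_eq_one_iff_mul_comm] at h3
        rw [← map_mul, ← map_mul, h3]
  obtain ⟨D, hDn, hDN, hD1, hDc⟩ := hD
  obtain ⟨d, hd, hd1⟩ := D.bot_or_exists_ne_one.resolve_left hD1
  obtain ⟨l, hl, hld⟩ := Nat.exists_prime_and_dvd (n := orderOf d) (by simpa using hd1)
  refine ⟨l, { carrier := {v | v ∈ D ∧ v ^ l = 1}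
               mul_mem' := ?_
               one_mem' := ⟨D.one_mem, one_pow _⟩
               inv_mem' := ?_ }, hl, ⟨?_⟩, ?_, ?_, ?_, ?_⟩
  · rintro x y ⟨hx, hx1⟩ ⟨hy, hy1⟩
    refine ⟨D.mul_mem hx hy, ?_⟩
    rw [(show Commute x y from hDc x hx y hy).mul_pow, hx1, hy1, one_mul]
  · rintro x ⟨hx, hx1⟩
    exact ⟨D.inv_mem hx, by rw [inv_pow, hx1, inv_one]⟩
  · rintro x ⟨hx, hx1⟩ g
    exact ⟨hDn.conj_mem x hx g, by rw [conj_pow, hx1]; group⟩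
  · rintro x ⟨hx, _⟩; exact hDN hx
  · intro hbot
    have hx := orderOf_pow_orderOf_div (orderOf_pos d).ne' hld
    have hmem : d ^ (orderOf d / l) ∈ (⊥ : Subgroup G) := by
      rw [← hbot]
      exact ⟨D.pow_mem hd _, by nth_rewrite 2 [← hx]; exact pow_orderOf_eq_one _⟩
    rw [Subgroup.mem_bot] at hmem
    rw [hmem, orderOf_one] at hx
    exact hl.one_lt.ne hx
  · rintro ⟨x, hx, hx1⟩
    exact ⟨1, Subtype.ext (by simpa using hx1)⟩
  · rintro x ⟨hx, _⟩ y ⟨hy, _⟩; exact hDc x hx y hy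

theorem x_card_quot (V : Subgroup G) : Nat.card G = Nat.card V * Nat.card (G ⧸ V) :=
  (Subgroup.card_mul_index V).symm

theorem x_prime_quot {V : Subgroup G} {l a : ℕ} (hl : l.Prime) (hV : IsPGroup l V) (ha : a.Prime)
    (hal : a ≠ l) : (a ∣ Nat.card G ↔ a ∣ Nat.card (G ⧸ V)) ∧ ¬ a ∣ Nat.card V := by
  have := Fact.mk hl
  obtain ⟨k, hk⟩ := IsPGroup.iff_card.1 hV
  have h : ¬ a ∣ Nat.card V := by
    rw [hk]; intro h
    exact hal ((Nat.prime_dvd_prime_iff_eq ha hl).1 (ha.dvd_of_dvd_pow h))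
  refine ⟨?_, h⟩
  rw [x_card_quot V, ha.dvd_mul]
  tauto

theorem x_quot_lt {V : Subgroup G} (hV : V ≠ ⊥) : Nat.card (G ⧸ V) < Nat.card G := by
  rw [x_card_quot V]
  have h1 : 0 < Nat.card (G ⧸ V) := Nat.card_pos
  have h2 : 1 < Nat.card V := by rwa [Subgroup.one_lt_card_iff_ne_bot]
  nlinarith

theorem x_luc_aux {a b c : ℕ} (ha : a.Prime) (hb : b.Prime) (hc : c.Prime) (hab : a ≠ b) (hac : a ≠ c)
    (hbc : b ≠ c) (nab : ¬ ∃ g : G, orderOf g = a * b) (nac : ¬ ∃ g : G, orderOf g = a * c)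
    (nbc : ¬ ∃ g : G, orderOf g = b * c) [Group.IsSolvable G]
    (db : b ∣ Nat.card G) (dc : c ∣ Nat.card G)
    (V : Subgroup G) (hV : V.Normal) (hVc : ∀ x ∈ V, ∀ y ∈ V, x * y = y * x) (hVp : IsPGroup a V)
    (hV1 : V ≠ ⊥) : False := by
  obtain ⟨E, t, hE, htE, ⟨h1, h2⟩ | ⟨h1, h2⟩⟩ := x_H hb hc hbc db dc nbc
  · exact x_K ha hb hc hab hac hbc nab nac nbc V hV hVc hVp hV1 E h1 hE t h2 htE
  · exact x_K ha hc hb hac hab hbc.symm nac nab (by rwa [mul_comm]) V hV hVc hVp hV1 E h1 hE t h2 htE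

theorem x_luc {a b c : ℕ} (ha : a.Prime) (hb : b.Prime) (hc : c.Prime) (hab : a ≠ b) (hac : a ≠ c)
    (hbc : b ≠ c) : ∀ (n : ℕ) (G : Type u) [Group G] [Finite G], Nat.card G = n →
    Group.IsSolvable G → a ∣ Nat.card G → b ∣ Nat.card G → c ∣ Nat.card G →
    (¬ ∃ g : G, orderOf g = a * b) → (¬ ∃ g : G, orderOf g = a * c) →
    (¬ ∃ g : G, orderOf g = b * c) → False := by
  intro n
  induction n using Nat.strong_induction_on with
  | _ n ih =>
  intro G _ _ hn hs da db dc nab nac nbc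
  have htop : (⊤ : Subgroup G) ≠ ⊥ := by
    rw [← Subgroup.one_lt_card_iff_ne_bot, Subgroup.card_top]
    exact lt_of_lt_of_le ha.one_lt (Nat.le_of_dvd Nat.card_pos da)
  obtain ⟨l, V, hl, hV, -, hV1, hVp, hVc⟩ := x_M (⊤ : Subgroup G) htop
  by_cases hla : l = a
  · subst hla
    exact x_luc_aux hl hb hc hab hac hbc nab nac nbc db dc V hV hVc hVp hV1
  by_cases hlb : l = b
  · subst hlb
    exact x_luc_aux hl ha hc hab.symm hbc hac (by rwa [mul_comm]) nbc nac da dc V hV hVc hVp hV1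
  by_cases hlc : l = c
  · subst hlc
    exact x_luc_aux hl ha hb hac.symm hbc.symm hab (by rwa [mul_comm]) (by rwa [mul_comm]) nab da db
      V hV hVc hVp hV1
  exact ih _ (hn ▸ x_quot_lt hV1) (G ⧸ V) rfl inferInstance
    ((x_prime_quot hl hVp ha (Ne.symm hla)).1.1 da) ((x_prime_quot hl hVp hb (Ne.symm hlb)).1.1 db)
    ((x_prime_quot hl hVp hc (Ne.symm hlc)).1.1 dc) (x_quot nab) (x_quot nac) (x_quot nbc)

theorem x_lift {P : Type*} [Group P] (φ : G →* P) (V : Subgroup G) [V.Normal] (hV : V ≤ φ.ker)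
    [hs : Group.IsSolvable φ.ker] :
    ∃ ψ : G ⧸ V →* P, (∀ g : G, ψ (g : G ⧸ V) = φ g) ∧ ψ.range = φ.range ∧ Group.IsSolvable ψ.ker ∧
      Nat.card φ.ker = Nat.card V * Nat.card ψ.ker := by
  refine ⟨QuotientGroup.lift V φ hV, fun g => rfl, ?_, ?_, ?_⟩
  · ext x
    constructor
    · rintro ⟨y, rfl⟩
      obtain ⟨g, rfl⟩ := QuotientGroup.mk'_surjective V y
      exact ⟨g, rfl⟩
    · rintro ⟨g, rfl⟩; exact ⟨(g : G ⧸ V), rfl⟩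
  · let f : φ.ker →* (QuotientGroup.lift V φ hV).ker :=
      { toFun := fun g => ⟨((g : G) : G ⧸ V), g.2⟩
        map_one' := rfl
        map_mul' := fun x y => rfl }
    refine Group.isSolvable_of_surjective (f := f) ?_
    rintro ⟨y, hy⟩
    obtain ⟨g, rfl⟩ := QuotientGroup.mk'_surjective V y
    exact ⟨⟨g, hy⟩, rfl⟩
  · have h1 := Subgroup.card_mul_index φ.ker
    have h2 := Subgroup.card_mul_index (QuotientGroup.lift V φ hV).ker
    have h3 := x_card_quot V
    have hr : (QuotientGroup.lift V φ hV).range = φ.range := by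
      ext x
      constructor
      · rintro ⟨y, rfl⟩
        obtain ⟨g, rfl⟩ := QuotientGroup.mk'_surjective V y
        exact ⟨g, rfl⟩
      · rintro ⟨g, rfl⟩; exact ⟨(g : G ⧸ V), rfl⟩
    rw [Subgroup.index_ker] at h1 h2
    rw [hr] at h2
    have : Finite φ.range := Finite.of_surjective φ.rangeRestrict φ.rangeRestrict_surjective
    have h4 : 0 < Nat.card φ.range := Nat.card_pos
    apply Nat.eq_of_mul_eq_mul_right h4
    rw [h1, h3, ← h2, mul_assoc]

theorem x_index (φ : G →* Equiv.Perm (Fin 5)) (hr : alternatingGroup (Fin 5) ≤ φ.range) :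
    60 ∣ φ.ker.index ∧ φ.ker.index ∣ 120 := by
  rw [Subgroup.index_ker]
  constructor
  · have h := Subgroup.card_dvd_of_le hr
    rw [nat_card_alternatingGroup] at h
    simpa [Nat.factorial] using h
  · have h := Subgroup.card_subgroup_dvd_card φ.range
    rw [Nat.card_perm] at h
    simpa [Nat.factorial] using h

theorem x_A {p : ℕ} (hp : p.Prime) (p2 : p ≠ 2) (p3 : p ≠ 3) (p5 : p ≠ 5) :
    ∀ (n : ℕ) (G : Type u) [Group G] [Finite G], Nat.card G = n →
    ∀ φ : G →* Equiv.Perm (Fin 5), alternatingGroup (Fin 5) ≤ φ.range → Group.IsSolvable φ.ker →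
    p ∣ Nat.card G → (¬ ∃ g : G, orderOf g = 3 * p) → (¬ ∃ g : G, orderOf g = 5 * p) →
    (¬ ∃ g : G, orderOf g = 15) → ¬ 3 ∣ Nat.card φ.ker ∧ ¬ 5 ∣ Nat.card φ.ker := by
  intro n
  induction n using Nat.strong_induction_on with
  | _ n ih =>
  intro G _ _ hn φ hr hs dp n3 n5 n15
  have q3 : Nat.Prime 3 := by norm_num
  have q5 : Nat.Prime 5 := by norm_num
  by_cases hbot : φ.ker = ⊥
  · rw [hbot]; simp
  obtain ⟨h60, h120⟩ := x_index φ hr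
  have i3 : 3 ∣ φ.ker.index := (by norm_num : 3 ∣ 60).trans h60
  have i5 : 5 ∣ φ.ker.index := (by norm_num : 5 ∣ 60).trans h60
  have hpN : p ∣ Nat.card φ.ker := by
    rw [← Subgroup.card_mul_index φ.ker] at dp
    refine (hp.dvd_mul.1 dp).resolve_right fun h => ?_
    have h := h.trans h120
    rw [show 120 = 2^3*3*5 by norm_num, hp.dvd_mul, hp.dvd_mul] at h
    rcases h with (h | h) | h
    · exact p2 ((Nat.prime_dvd_prime_iff_eq hp Nat.prime_two).1 (hp.dvd_of_dvd_pow h))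
    · exact p3 ((Nat.prime_dvd_prime_iff_eq hp q3).1 h)
    · exact p5 ((Nat.prime_dvd_prime_iff_eq hp q5).1 h)
  obtain ⟨l, V, hl, hV, hVN, hV1, hVp, hVc⟩ := x_M φ.ker hbot
  by_cases hlp : l = p
  · subst hlp
    constructor
    · intro h
      obtain ⟨E, t, h1, h2, h3, h4⟩ := x_frattini φ.ker q3 q5 h i5
      exact x_K hl q3 q5 p3 p5 (by norm_num) (by rwa [mul_comm]) (by rwa [mul_comm]) n15 V hV hVc hVp hV1
        E h1 h2 t h3 h4
    · intro h
      obtain ⟨E, t, h1, h2, h3, h4⟩ := x_frattini φ.ker q5 q3 h i3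
      exact x_K hl q5 q3 p5 p3 (by norm_num) (by rwa [mul_comm]) (by rwa [mul_comm]) n15 V hV hVc hVp hV1
        E h1 h2 t h3 h4
  by_cases hl3 : l = 3
  · subst hl3
    obtain ⟨E, t, h1, h2, h3, h4⟩ := x_frattini φ.ker hp q5 hpN i5
    exact (x_K q3 hp q5 p3.symm (by norm_num) p5 n3 n15 (by rwa [mul_comm]) V hV hVc hVp hV1
        E h1 h2 t h3 h4).elim
  by_cases hl5 : l = 5
  · subst hl5
    obtain ⟨E, t, h1, h2, h3, h4⟩ := x_frattini φ.ker hp q3 hpN i3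
    exact (x_K q5 hp q3 p5.symm (by norm_num) p3 n5 n15 (by rwa [mul_comm]) V hV hVc hVp hV1
        E h1 h2 t h3 h4).elim
  obtain ⟨ψ, -, hψr, hψs, hcard⟩ := x_lift φ V hVN
  have := ih _ (hn ▸ x_quot_lt hV1) (G ⧸ V) rfl ψ (hψr ▸ hr) hψs
    ((x_prime_quot hl hVp hp (Ne.symm hlp)).1.1 dp) (x_quot n3) (x_quot n5) (x_quot n15)
  rw [hcard, q3.dvd_mul, q5.dvd_mul]
  have h3 := (x_prime_quot hl hVp q3 (Ne.symm hl3)).2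
  have h5 := (x_prime_quot hl hVp q5 (Ne.symm hl5)).2
  tauto

/-- lift an element of coprime order -/
theorem x_lift_ord {P : Type*} [Group P] (φ : G →* P) (q : ℕ) (hq : Nat.Coprime q (Nat.card φ.ker))
    (g : G) (hg : φ g ^ q = 1) : ∃ k : ℕ, (g ^ k) ^ q = 1 ∧ φ (g ^ k) = φ g := by
  obtain ⟨k, h1, h2⟩ := Nat.chineseRemainder hq 1 0
  refine ⟨k, ?_, ?_⟩
  · rw [← pow_mul, mul_comm, pow_mul]
    have hmem : g ^ q ∈ φ.ker := by rw [MonoidHom.mem_ker, map_pow, hg]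
    obtain ⟨m, hm⟩ := (Nat.modEq_zero_iff_dvd).1 h2
    rw [hm, pow_mul]
    have := pow_card_eq_one' (x := (⟨g ^ q, hmem⟩ : φ.ker))
    have := congrArg Subtype.val this
    simp only [Subgroup.coe_pow, Subgroup.coe_one] at this
    rw [this, one_pow]
  · rw [map_pow]
    conv_rhs => rw [← pow_one (φ g)]
    rw [pow_eq_pow_iff_modEq]
    exact h1.of_dvd (orderOf_dvd_of_pow_eq_one hg)

theorem x_B_abs {A : Type*} [AddCommGroup A] (ρ : G →* AddMonoid.End A) (a b : G) (k : ℕ)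
    (ha : a ^ 3 = 1) (hb : b ^ 3 = 1) (hfa : ∀ u, ρ a u = u → u = 0) (hfb : ∀ u, ρ b u = u → u = 0)
    (hx : ((a * b) ^ k) ^ 5 = 1) (h5 : ∀ u : A, 5 • u = 0 → u = 0) (v : A)
    (hv : ρ ((a * b) ^ k) v = v) : ρ ((a * b) ^ k) (ρ a⁻¹ v) = ρ a⁻¹ v := by
  have qa : ∀ u, u + ρ a u + ρ (a ^ 2) u = 0 := fun u => by
    simpa [Finset.sum_range_succ] using x_norm_zero ρ a 3 ha hfa u
  have qb : ∀ u, u + ρ b u + ρ (b ^ 2) u = 0 := fun u => by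
    simpa [Finset.sum_range_succ] using x_norm_zero ρ b 3 hb hfb u
  have ia : a⁻¹ = a ^ 2 := by rw [inv_eq_iff_mul_eq_one, ← pow_succ', ha]
  set c := a * b with hc
  set x := c ^ k with hxdef
  have hcx : Commute c x := Commute.self_pow c k
  -- c preserves fixed points of x
  have cF : ∀ u, ρ x u = u → ρ x (ρ c u) = ρ c u := by
    intro u hu
    rw [x_rho, ← hcx.eq, ← x_rho, hu]
  have ciF : ∀ u, ρ x u = u → ρ x (ρ c⁻¹ u) = ρ c⁻¹ u := by
    intro u hu
    rw [x_rho, ← hcx.inv_left.eq, ← x_rho, hu]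
  have step : ∀ f, ρ x f = f → ∃ w, ρ x w = w ∧ ρ c (ρ a f) = ρ a (ρ c⁻¹ f) + w := by
    intro f hf
    refine ⟨ρ c (ρ c⁻¹ f) - ρ c f + (ρ c (ρ c⁻¹ f) - ρ c (ρ c⁻¹ f)) + (ρ c (ρ c⁻¹ f)) - ρ c (ρ c⁻¹ f) - ρ c (ρ c⁻¹ f) + ρ c (ρ c⁻¹ f), ?_, ?_⟩
    · simp only [map_add, map_sub, cF _ hf, cF _ (ciF _ hf)]
    · have e1 := congrArg (ρ c) (qa f)
      simp only [map_add, map_zero] at e1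
      have e2 := congrArg (ρ a) (qb (ρ c⁻¹ f))
      simp only [map_add, map_zero] at e2
      have e3 : ρ c (ρ (a ^ 2) f) = ρ a (ρ (b ^ 2) (ρ c⁻¹ f)) := by
        simp only [x_rho]; congr 2
        rw [← ia, hc]; group
      have e4 : ρ a (ρ b (ρ c⁻¹ f)) = ρ c (ρ c⁻¹ f) := by
        simp only [x_rho, hc]; congr 2
        group
      rw [e3] at e1
      rw [e4] at e2
      have e5 := e1.trans e2.symm
      have e6 : ρ c f + ρ c (ρ a f) = ρ a (ρ c⁻¹ f) + ρ c (ρ c⁻¹ f) := add_right_cancel e5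
      have e7 : ρ c (ρ a f) = ρ a (ρ c⁻¹ f) + ρ c (ρ c⁻¹ f) - ρ c f := by rw [← e6]; abel
      rw [e7]; abel
  have steps : ∀ n : ℕ, ∀ f, ρ x f = f → ∃ w, ρ x w = w ∧ ρ (c ^ n) (ρ a f) = ρ a (ρ (c ^ n)⁻¹ f) + w := by
    intro n
    induction n with
    | zero => intro f _; exact ⟨0, by simp, by simp⟩
    | succ n ih =>
      intro f hf
      obtain ⟨w, hw, hw2⟩ := step f hf
      obtain ⟨w', hw', hw2'⟩ := ih _ (ciF f hf)
      have cnF : ρ x (ρ (c ^ n) w) = ρ (c ^ n) w := by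
        rw [x_rho, ← (hcx.pow_left n).eq, ← x_rho, hw]
      refine ⟨w' + ρ (c ^ n) w, by rw [map_add, hw', cnF], ?_⟩
      rw [pow_succ, ← x_rho, hw2, map_add, hw2', x_rho (ρ) (c ^ n)⁻¹, mul_inv_rev, add_assoc]
      congr 4
      rw [← mul_inv_rev, ← mul_inv_rev, ← pow_succ, ← pow_succ']
  obtain ⟨w, hw, hw2⟩ := steps k v hv
  have hvi : ρ x⁻¹ v = v := by
    nth_rewrite 1 [← hv]; rw [x_rho]; simp
  rw [← hxdef, hvi] at hw2
  have hit : ∀ n : ℕ, ρ (x ^ n) (ρ a v) = ρ a v + n • w := by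
    intro n
    induction n with
    | zero => simp
    | succ n ih => rw [pow_succ', ← x_rho, ih, map_add, hw2, map_nsmul, hw, succ_nsmul]; abel
  have h5' := hit 5
  rw [hx, map_one] at h5'
  have hw0 : w = 0 := h5 w (by simpa using h5')
  rw [hw0, add_zero] at hw2
  have e : ρ a⁻¹ v = - (v + ρ a v) := by
    rw [ia]; exact (neg_eq_of_add_eq_zero_right (qa v)).symm
  rw [e, map_neg, map_add, hv, hw2]

set_option maxRecDepth 100000 in
theorem x_B_key (φ : G →* Equiv.Perm (Fin 5)) (hr : alternatingGroup (Fin 5) ≤ φ.range)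
    (c3 : ¬ 3 ∣ Nat.card φ.ker) (c5 : ¬ 5 ∣ Nat.card φ.ker) {r : ℕ} (pr : r.Prime) (r3 : r ≠ 3)
    (r5 : r ≠ 5) (n3r : ¬ ∃ g : G, orderOf g = 3 * r)
    (V : Subgroup G) (hV : V.Normal) (hVc : ∀ x ∈ V, ∀ y ∈ V, x * y = y * x) (hVp : IsPGroup r V)
    (x v : G) (hx : orderOf x = 5) (hv : v ∈ V) (hv1 : v ≠ 1) (hxv : x * v = v * x) : False := by
  have q3 : Nat.Prime 3 := by norm_num
  have q5 : Nat.Prime 5 := by norm_num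
  have f3 := Fact.mk q3
  have f5 := Fact.mk q5
  set α : Equiv.Perm (Fin 5) := c[0, 1, 2] with hα
  set β : Equiv.Perm (Fin 5) := c[2, 3, 4] with hβ
  have hαm : α ∈ alternatingGroup (Fin 5) := by rw [Equiv.Perm.mem_alternatingGroup]; decide
  have hβm : β ∈ alternatingGroup (Fin 5) := by rw [Equiv.Perm.mem_alternatingGroup]; decide
  have hα3 : α ^ 3 = 1 := by decide
  have hβ3 : β ^ 3 = 1 := by decide
  have hα1 : α ≠ 1 := by decide
  have hβ1 : β ≠ 1 := by decide
  have hαβ5 : (α * β) ^ 5 = 1 := by decide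
  have hαβ1 : α * β ≠ 1 := by decide
  have hz3 : ((α * β) * α * (α * β)⁻¹ * α⁻¹) ^ 3 = 1 := by decide
  have hz1 : ((α * β) * α * (α * β)⁻¹ * α⁻¹) ≠ 1 := by decide
  clear_value α β
  have k3 : Nat.Coprime 3 (Nat.card φ.ker) := (Nat.Prime.coprime_iff_not_dvd q3).2 c3
  have k5 : Nat.Coprime 5 (Nat.card φ.ker) := (Nat.Prime.coprime_iff_not_dvd q5).2 c5
  obtain ⟨a0, ha0⟩ := hr hαm
  obtain ⟨b0, hb0⟩ := hr hβm
  obtain ⟨ka, ha3, haφ⟩ := x_lift_ord φ 3 k3 a0 (by rw [ha0, hα3])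
  obtain ⟨kb, hb3, hbφ⟩ := x_lift_ord φ 3 k3 b0 (by rw [hb0, hβ3])
  set a := a0 ^ ka
  set b := b0 ^ kb
  rw [ha0] at haφ
  rw [hb0] at hbφ
  have hab : φ (a * b) = α * β := by rw [map_mul, haφ, hbφ]
  obtain ⟨k, hk5, hkφ⟩ := x_lift_ord φ 5 k5 (a * b) (by rw [hab, hαβ5])
  rw [hab] at hkφ
  set y := (a * b) ^ k with hy
  have hy1 : y ≠ 1 := by
    intro h; rw [h, map_one] at hkφ; exact hαβ1 hkφ.symm
  have hyo : orderOf y = 5 := orderOf_eq_prime hk5 hy1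
  -- Sylow conjugacy
  have hfac : 5 ^ (Nat.card G).factorization 5 = 5 := by
    have h25 : ¬ 5 ^ 2 ∣ Nat.card G := by
      rw [← Subgroup.card_mul_index φ.ker]
      intro h
      have h1 := (Nat.Coprime.dvd_of_dvd_mul_left (Nat.Coprime.pow_left 2 k5) h).trans (x_index φ hr).2
      norm_num at h1
    have h5 : 5 ∣ Nat.card G := hx ▸ orderOf_dvd_natCard x
    have h1 : 1 ≤ (Nat.card G).factorization 5 :=
      (q5.dvd_iff_one_le_factorization Nat.card_pos.ne').1 h5
    have h2 : ¬ 2 ≤ (Nat.card G).factorization 5 := by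
      rwa [← q5.pow_dvd_iff_le_factorization Nat.card_pos.ne']
    rw [show (Nat.card G).factorization 5 = 1 by omega, pow_one]
  let P : Sylow 5 G := Sylow.ofCard (Subgroup.zpowers x) (by rw [Nat.card_zpowers, hx, hfac])
  let Q : Sylow 5 G := Sylow.ofCard (Subgroup.zpowers y) (by rw [Nat.card_zpowers, hyo, hfac])
  obtain ⟨g, hg⟩ := MulAction.exists_smul_eq G P Q
  have hyP : y ∈ g • P := by
    rw [hg]; exact Subgroup.mem_zpowers y
  have hyP' : ∃ j : ℤ, y = g * x ^ j * g⁻¹ := by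
    obtain ⟨w, ⟨j, hj⟩, hw⟩ := hyP
    refine ⟨j, ?_⟩
    rw [← hw, ← hj]
    simp [MulAut.smul_def]
  obtain ⟨j, hj⟩ := hyP'
  have hcom : y * (g * v * g⁻¹) = (g * v * g⁻¹) * y := by
    have h1 : x ^ j * v = v * x ^ j := (show Commute x v from hxv).zpow_left j
    rw [hj]
    calc g * x ^ j * g⁻¹ * (g * v * g⁻¹) = g * (x ^ j * v) * g⁻¹ := by group
      _ = g * (v * x ^ j) * g⁻¹ := by rw [h1]
      _ = _ := by group
  have hv'V : g * v * g⁻¹ ∈ V := hV.conj_mem v hv g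
  have hv'1 : g * v * g⁻¹ ≠ 1 := by
    rwa [Ne, conj_eq_one_iff]
  generalize g * v * g⁻¹ = v' at hcom hv'V hv'1
  obtain ⟨A, _, ρ, ι, hι, hιV, hVι, hι0, hιa, hιρ⟩ := x_action V hV hVc
  have hfix : ∀ g u, ρ g u = u → g * ι u = ι u * g := by
    intro g u h
    have := hιρ g u
    rw [h] at this
    nth_rewrite 2 [this]; group
  have hfix' : ∀ g u, g * ι u = ι u * g → ρ g u = u := by
    intro g u h
    apply hι
    rw [hιρ, h]; group
  have hne : ∀ u, u ≠ 0 → r ∣ orderOf (ι u) := fun u hu =>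
    x_pgroup pr hVp (hιV u) (fun h => hu (hι (h.trans hι0.symm)))
  have hf3 : ∀ g : G, 3 ∣ orderOf g → ∀ u, ρ g u = u → u = 0 := by
    intro g hg u hu
    by_contra h0
    exact n3r (x_comm_order q3 pr r3.symm hg (hne u h0) (hfix _ _ hu))
  obtain ⟨u, rfl⟩ := hVι v' hv'V
  have hu0 : u ≠ 0 := by rintro rfl; exact hv'1 hι0
  have hpow : ∀ (u : A) (n : ℕ), ι (n • u) = ι u ^ n := by
    intro u n
    induction n with
    | zero => simpa using hι0
    | succ n ih => rw [succ_nsmul, hιa, ih, pow_succ]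
  have oa : 3 ∣ orderOf a := by
    have := orderOf_map_dvd φ a
    rwa [haφ, orderOf_eq_prime hα3 hα1] at this
  have ob : 3 ∣ orderOf b := by
    have := orderOf_map_dvd φ b
    rwa [hbφ, orderOf_eq_prime hβ3 hβ1] at this
  have key := x_B_abs ρ a b k ha3 hb3 (hf3 a oa) (hf3 b ob) hk5 (by
    intro w hw
    by_contra h0
    have h1 := hpow w 5
    rw [hw, hι0] at h1
    have h2 := (hne w h0).trans (orderOf_dvd_of_pow_eq_one h1.symm)
    exact r5 ((Nat.prime_dvd_prime_iff_eq pr q5).1 h2)) u (hfix' _ _ hcom)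
  rw [← hy] at key
  have hz : ρ (y * a * y⁻¹ * a⁻¹) u = u := by
    have e1 : ρ y⁻¹ (ρ a⁻¹ u) = ρ a⁻¹ u := by
      nth_rewrite 1 [← key]; rw [x_rho]; simp
    rw [← x_rho, ← x_rho, e1, x_rho]
    simpa using hfix' _ _ hcom
  refine hu0 (hf3 _ ?_ u hz)
  have := orderOf_map_dvd φ (y * a * y⁻¹ * a⁻¹)
  simp only [map_mul, map_inv, hkφ, haφ] at this
  rwa [orderOf_eq_prime (by simpa using hz3) (by simpa using hz1)] at this

theorem x_B {r : ℕ} (pr : r.Prime) (r3 : r ≠ 3) (r5 : r ≠ 5) :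
    ∀ (n : ℕ) (G : Type u) [Group G] [Finite G], Nat.card G = n →
    ∀ φ : G →* Equiv.Perm (Fin 5), alternatingGroup (Fin 5) ≤ φ.range → Group.IsSolvable φ.ker →
    ¬ 3 ∣ Nat.card φ.ker → ¬ 5 ∣ Nat.card φ.ker → (¬ ∃ g : G, orderOf g = 3 * r) →
    ¬ ∃ g : G, orderOf g = 5 * r := by
  intro n
  induction n using Nat.strong_induction_on with
  | _ n ih =>
  intro G _ _ hn φ hr hs c3 c5 n3r
  have q5 : Nat.Prime 5 := by norm_num
  rintro ⟨g, hg⟩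
  by_cases hbot : φ.ker = ⊥
  · have hinj : Function.Injective φ := (MonoidHom.ker_eq_bot_iff φ).1 hbot
    have ho : orderOf (φ g) = 5 * r := by rw [orderOf_injective φ hinj, hg]
    have hd : 5 * r ∣ 120 := by
      have := orderOf_dvd_natCard (φ g)
      rw [ho, Nat.card_perm] at this
      simpa [Nat.factorial] using this
    have hr2 : r = 2 := by
      have h : r ∣ 2 ^ 3 * 3 := Nat.dvd_of_mul_dvd_mul_left (k := 5) (by norm_num) (by simpa using hd)
      rw [pr.dvd_mul] at h
      rcases h with h | h
      · exact (Nat.prime_dvd_prime_iff_eq pr Nat.prime_two).1 (pr.dvd_of_dvd_pow h)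
      · exact absurd ((Nat.prime_dvd_prime_iff_eq pr Nat.prime_three).1 h) r3
    subst hr2
    rcases x_pow_ten (φ g) (by have := pow_orderOf_eq_one (φ g); rwa [ho] at this) with h | h
    · have := orderOf_dvd_of_pow_eq_one h
      rw [ho] at this; norm_num at this
    · have := orderOf_dvd_of_pow_eq_one h
      rw [ho] at this; norm_num at this
  obtain ⟨l, V, hl, hV, hVN, hV1, hVp, hVc⟩ := x_M φ.ker hbot
  have hx : orderOf (g ^ r) = 5 := by
    have := orderOf_pow_orderOf_div (orderOf_pos g).ne' (n := 5) (by rw [hg]; exact dvd_mul_right _ _)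
    rwa [hg, Nat.mul_div_cancel_left _ (by norm_num)] at this
  have hy : orderOf (g ^ 5) = r := by
    have := orderOf_pow_orderOf_div (orderOf_pos g).ne' (n := r) (by rw [hg]; exact dvd_mul_left _ _)
    rwa [hg, Nat.mul_div_cancel _ pr.pos] at this
  have hyV : g ^ 5 ∉ V := by
    intro hmem
    have h1 : g ^ 5 ≠ 1 := by
      intro h; rw [h, orderOf_one] at hy; exact pr.one_lt.ne hy
    have hd := x_pgroup hl hVp hmem h1
    rw [hy] at hd
    have : l = r := (Nat.prime_dvd_prime_iff_eq hl pr).1 hd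
    subst this
    exact x_B_key φ hr c3 c5 pr r3 r5 n3r V hV hVc hVp (g ^ l) (g ^ 5) hx hmem h1
      (Commute.pow_pow (Commute.refl g) _ _)
  obtain ⟨ψ, -, hψr, hψs, hcard⟩ := x_lift φ V hVN
  rw [hcard] at c3 c5
  refine ih _ (hn ▸ x_quot_lt hV1) (G ⧸ V) rfl ψ (hψr ▸ hr) hψs
    (fun h => c3 (h.mul_left _)) (fun h => c5 (h.mul_left _)) (x_quot n3r) ?_
  have hxV : g ^ r ∉ V := by
    intro hmem
    apply c5
    refine Dvd.dvd.mul_right ?_ _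
    have := Subgroup.orderOf_dvd_natCard V hmem
    rwa [hx] at this
  refine x_comm_order q5 pr r5.symm (x := ((g ^ r : G) : G ⧸ V)) (y := ((g ^ 5 : G) : G ⧸ V)) ?_ ?_ ?_
  · rw [← hx]
    have f5 := Fact.mk q5
    rw [hx]
    refine (orderOf_eq_prime ?_ ?_).symm.dvd
    · rw [← QuotientGroup.mk_pow, ← hx, pow_orderOf_eq_one]; rfl
    · rwa [Ne, QuotientGroup.eq_one_iff]
  · have fr := Fact.mk pr
    refine (orderOf_eq_prime ?_ ?_).symm.dvd
    · have e := pow_orderOf_eq_one (g ^ 5)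
      rw [hy] at e
      rw [← QuotientGroup.mk_pow, e]; rfl
    · rwa [Ne, QuotientGroup.eq_one_iff]
  · rw [← QuotientGroup.mk_mul, ← QuotientGroup.mk_mul]
    congr 1
    exact Commute.pow_pow (Commute.refl g) _ _

def xPS (G : Type u) [Group G] : Prop :=
  ∀ (B : Subgroup G), B.Normal → ∀ (T : Type u) [Group T] [IsSimpleGroup T] (f : B →* T),
    Function.Surjective f → (∀ x y : T, x * y = y * x) ∨ Nonempty (T ≃* alternatingGroup (Fin 5))

theorem x_A5_simple : IsSimpleGroup (alternatingGroup (Fin 5)) :=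
  alternatingGroup.isSimpleGroup (by simp)

theorem x_PS_step (K H : Subgroup G) (hKH : K ≤ H) (hN : (K.subgroupOf H).Normal)
    (hQ : IsCyclic (H ⧸ K.subgroupOf H) ∨ Nonempty ((H ⧸ K.subgroupOf H) ≃* alternatingGroup (Fin 5)))
    (B : Subgroup G) (hBH : B ≤ H) (hBn : ∀ h ∈ H, ∀ b ∈ B, h * b * h⁻¹ ∈ B)
    (T : Type u) [Group T] [IsSimpleGroup T] (f : B →* T) (hf : Function.Surjective f)
    (hk : ∀ b : B, (b : G) ∈ K → f b = 1) :
    (∀ x y : T, x * y = y * x) ∨ Nonempty (T ≃* alternatingGroup (Fin 5)) := by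
  let π : B →* H ⧸ K.subgroupOf H := (QuotientGroup.mk' _).comp (Subgroup.inclusion hBH)
  have hπ : ∀ b : B, π b = 1 ↔ (b : G) ∈ K := by
    intro b
    change ((Subgroup.inclusion hBH b : H) : H ⧸ K.subgroupOf H) = 1 ↔ _
    rw [QuotientGroup.eq_one_iff, Subgroup.mem_subgroupOf]; rfl
  have hker : π.ker ≤ f.ker := by
    intro b hb
    exact hk b ((hπ b).1 hb)
  rcases hQ with hQ | hQ
  · left
    intro x y
    obtain ⟨b, rfl⟩ := hf x
    obtain ⟨b', rfl⟩ := hf y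
    have hc : π b * π b' = π b' * π b := by
      let _ := IsCyclic.commGroup (α := H ⧸ K.subgroupOf H)
      exact mul_comm _ _
    have h1 : b * b' * (b' * b)⁻¹ ∈ π.ker := by
      rw [MonoidHom.mem_ker, map_mul, map_inv, map_mul, map_mul, hc, mul_inv_cancel]
    have h2 := hker h1
    rw [MonoidHom.mem_ker, map_mul, map_inv, mul_inv_eq_one, map_mul, map_mul] at h2
    exact h2
  · right
    obtain ⟨e⟩ := hQ
    have := x_A5_simple
    have hQs : IsSimpleGroup (H ⧸ K.subgroupOf H) := by
      have : Nontrivial (H ⧸ K.subgroupOf H) := e.toEquiv.nontrivial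
      exact IsSimpleGroup.isSimpleGroup_of_surjective e.symm.toMonoidHom e.symm.surjective
    have hrn : π.range.Normal := by
      constructor
      rintro _ ⟨b, rfl⟩ q
      obtain ⟨h, rfl⟩ := QuotientGroup.mk'_surjective _ q
      exact ⟨⟨h * b * (h : G)⁻¹, hBn h h.2 b b.2⟩, rfl⟩
    obtain ⟨x, hx⟩ := exists_ne (1 : T)
    rcases IsSimpleGroup.eq_bot_or_eq_top_of_normal _ hrn with h | h
    · exfalso
      obtain ⟨b, rfl⟩ := hf x
      apply hx
      apply hker
      have : π b ∈ π.range := ⟨b, rfl⟩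
      rwa [h, Subgroup.mem_bot] at this
    · have hs : Function.Surjective π := MonoidHom.range_eq_top.1 h
      let θ : (H ⧸ K.subgroupOf H) →* T := π.liftOfSurjective hs ⟨f, hker⟩
      have hθ : ∀ b, θ (π b) = f b := fun b => MonoidHom.liftOfRightInverse_comp_apply _ _ _ ⟨f, hker⟩ b
      have hθs : Function.Surjective θ := fun t => by
        obtain ⟨b, rfl⟩ := hf t
        exact ⟨π b, hθ b⟩
      have hθi : Function.Injective θ := by
        rw [← MonoidHom.ker_eq_bot_iff]
        rcases IsSimpleGroup.eq_bot_or_eq_top_of_normal θ.ker inferInstance with h' | h'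
        · exact h'
        · exfalso
          obtain ⟨q, rfl⟩ := hθs x
          apply hx
          have : q ∈ θ.ker := by rw [h']; trivial
          exact this
      exact ⟨(MulEquiv.ofBijective θ ⟨hθi, hθs⟩).symm.trans e⟩

theorem x_PS_of (hG : IsPseudoSolvable G) : xPS G := by
  obtain ⟨n, H, h0, hl, hstep⟩ := hG
  have key : ∀ i : Fin (n+1), ∀ (B : Subgroup G), B ≤ H i → (∀ h ∈ H i, ∀ b ∈ B, h * b * h⁻¹ ∈ B) →
      ∀ (T : Type u) [Group T] [IsSimpleGroup T] (f : B →* T),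
      Function.Surjective f → (∀ x y : T, x * y = y * x) ∨ Nonempty (T ≃* alternatingGroup (Fin 5)) := by
    intro i
    induction i using Fin.induction with
    | zero =>
      intro B hB _ T _ _ f hf
      exfalso
      obtain ⟨x, hx⟩ := exists_ne (1 : T)
      obtain ⟨b, rfl⟩ := hf x
      apply hx
      have : (b : G) ∈ H 0 := hB b.2
      rw [h0, Subgroup.mem_bot] at this
      rw [show b = 1 from Subtype.ext this, map_one]
    | succ i ih =>
      intro B hB hBn T _ _ f hf
      obtain ⟨hle, hN, hQ⟩ := hstep i
      have hconj : ∀ h ∈ H i.succ, ∀ k ∈ H i.castSucc, h * k * h⁻¹ ∈ H i.castSucc := by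
        intro h hh k hk
        exact hN.conj_mem ⟨k, hle hk⟩ hk ⟨h, hh⟩
      have hKn : ((H i.castSucc).subgroupOf B).Normal :=
        ⟨fun k hk g => hconj g (hB g.2) k hk⟩
      rcases IsSimpleGroup.eq_bot_or_eq_top_of_normal _ (hKn.map f hf) with h | h
      · refine x_PS_step _ _ hle hN hQ B hB hBn T f hf fun b hb => ?_
        have : f b ∈ Subgroup.map f ((H i.castSucc).subgroupOf B) := ⟨b, hb, rfl⟩
        rwa [h, Subgroup.mem_bot] at this
      · refine ih (B ⊓ H i.castSucc) inf_le_right ?_ T (f.comp (Subgroup.inclusion inf_le_left)) ?_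
        · rintro h hh b ⟨hb1, hb2⟩
          exact ⟨hBn h (hle hh) b hb1, hconj h (hle hh) b hb2⟩
        · intro x
          have : x ∈ Subgroup.map f ((H i.castSucc).subgroupOf B) := by rw [h]; trivial
          obtain ⟨b, hb, rfl⟩ := this
          exact ⟨⟨b, b.2, hb⟩, rfl⟩
  intro B hB T _ _ f hf
  exact key (Fin.last n) B (by rw [hl]; exact le_top) (fun h _ b hb => hB.conj_mem b hb h) T f hf

theorem x_PS_quot (h : xPS G) (V : Subgroup G) [V.Normal] : xPS (G ⧸ V) := by
  intro B hB T _ _ f hf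
  refine h (B.comap (QuotientGroup.mk' V)) inferInstance T
    (f.comp ((QuotientGroup.mk' V).subgroupComap B)) (hf.comp ?_)
  exact MonoidHom.subgroupComap_surjective_of_surjective _ _ (QuotientGroup.mk'_surjective V)

theorem x_two {M : Type*} [Group M] [Finite M] (f g : M →* alternatingGroup (Fin 5))
    (hf : Function.Surjective f) (hg : Function.Surjective g)
    (h15 : ¬ ∃ x : M, orderOf x = 15) : f.ker ≤ g.ker := by
  have := x_A5_simple
  have hn : (f.ker.map g).Normal := (inferInstance : f.ker.Normal).map g hg
  rcases IsSimpleGroup.eq_bot_or_eq_top_of_normal _ hn with h | h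
  · intro k hk
    have : g k ∈ f.ker.map g := ⟨k, hk, rfl⟩
    rwa [h, Subgroup.mem_bot] at this
  · exfalso
    apply h15
    obtain ⟨m, hm⟩ := hf ⟨_, xC5_mem⟩
    have : (g m)⁻¹ * ⟨_, xB3_mem⟩ ∈ f.ker.map g := by rw [h]; trivial
    obtain ⟨k, hk, hk2⟩ := this
    have hk' : f k = 1 := hk
    have o5 : orderOf (f (m * k)) = 5 := by
      rw [map_mul, hk', mul_one, hm, ← Subgroup.orderOf_coe]
      exact x_ord5
    have o3 : orderOf (g (m * k)) = 3 := by
      rw [map_mul, hk2, mul_inv_cancel_left, ← Subgroup.orderOf_coe]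
      exact x_ord3
    apply x_ord_dvd (g := m * k)
    have d5 : 5 ∣ orderOf (m * k) := o5 ▸ orderOf_map_dvd f (m * k)
    have d3 : 3 ∣ orderOf (m * k) := o3 ▸ orderOf_map_dvd g (m * k)
    omega

theorem x_S1 (hPS : xPS G) (h15 : ¬ ∃ x : G, orderOf x = 15)
    (hab : ∀ V : Subgroup G, V.Normal → (∀ x ∈ V, ∀ y ∈ V, x * y = y * x) → V = ⊥)
    (M : Subgroup G) [M.Normal] (hM : M ≠ ⊥)
    (hmin : ∀ V : Subgroup G, V.Normal → V ≤ M → V ≠ M → V = ⊥) :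
    Nonempty (M ≃* alternatingGroup (Fin 5)) := by
  have := x_A5_simple
  have hc : ⁅M, M⁆ = M := by
    by_contra h
    have h1 := hmin ⁅M, M⁆ inferInstance (Subgroup.commutator_le_left M M) h
    rw [Subgroup.commutator_eq_bot_iff_le_centralizer] at h1
    exact hM (hab M inferInstance fun x hx y hy =>
      ((Subgroup.mem_centralizer_iff.1 (h1 hx)) y hy).symm)
  have hnt : Nontrivial M := (Subgroup.nontrivial_iff_ne_bot M).2 hM
  obtain ⟨N, hN⟩ := Set.Finite.exists_maximal (s := {N : Subgroup M | N.Normal ∧ N ≠ ⊤}) (Set.toFinite _)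
    ⟨⊥, inferInstance, bot_ne_top⟩
  obtain ⟨⟨hNn, hNt⟩, hNm⟩ := hN
  have hsimp : IsSimpleGroup (M ⧸ N) := by
    have : Nontrivial (M ⧸ N) := QuotientGroup.nontrivial_iff.2 hNt
    refine ⟨fun H hH => ?_⟩
    by_cases h : H.comap (QuotientGroup.mk' N) = ⊤
    · right
      rw [eq_top_iff]
      intro q _
      obtain ⟨m, rfl⟩ := QuotientGroup.mk'_surjective _ q
      have : m ∈ H.comap (QuotientGroup.mk' N) := by rw [h]; trivial
      exact this
    · left
      have h2 := hNm (y := H.comap (QuotientGroup.mk' N)) ⟨inferInstance, h⟩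
        (QuotientGroup.le_comap_mk' N H)
      rw [eq_bot_iff]
      intro q hq
      obtain ⟨m, rfl⟩ := QuotientGroup.mk'_surjective _ q
      rw [Subgroup.mem_bot]
      exact (QuotientGroup.eq_one_iff m).2 (h2 hq)
  rcases hPS M inferInstance (M ⧸ N) (QuotientGroup.mk' N) (QuotientGroup.mk'_surjective N) with h | h
  · exfalso
    apply hNt
    have h2 : ⁅M, M⁆ ≤ N.map M.subtype := by
      rw [Subgroup.commutator_le]
      intro a ha b hb
      refine ⟨(⟨a, ha⟩ : M) * (⟨b, hb⟩ : M) * (⟨a, ha⟩ : M)⁻¹ * (⟨b, hb⟩ : M)⁻¹, ?_, rfl⟩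
      refine (QuotientGroup.eq_one_iff _).1 ?_
      have := h (QuotientGroup.mk' N ⟨a, ha⟩) (QuotientGroup.mk' N ⟨b, hb⟩)
      change QuotientGroup.mk' N _ = 1
      rw [map_mul, map_mul, map_mul, map_inv, map_inv, this]
      group
    rw [hc] at h2
    rw [eq_top_iff]
    intro m _
    obtain ⟨n, hn, hnm⟩ := h2 m.2
    rwa [← show n = m from Subtype.ext hnm]
  · obtain ⟨e0⟩ := h
    let f : M →* alternatingGroup (Fin 5) := e0.toMonoidHom.comp (QuotientGroup.mk' N)
    have hfs : Function.Surjective f := e0.surjective.comp (QuotientGroup.mk'_surjective N)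
    have h15M : ¬ ∃ x : M, orderOf x = 15 := by
      rintro ⟨x, hx⟩
      exact h15 ⟨x, by rw [Subgroup.orderOf_coe, hx]⟩
    have hkn : (f.ker.map M.subtype).Normal := by
      constructor
      rintro _ ⟨k, hk, rfl⟩ g
      let c : MulAut M := MulAut.conjNormal g
      have h3 := x_two f (f.comp c.toMonoidHom) hfs (hfs.comp c.surjective) h15M hk
      exact ⟨c k, h3, MulAut.conjNormal_apply g k⟩
    have hk1 : f.ker.map M.subtype = ⊥ := by
      refine hmin _ hkn (Subgroup.map_subtype_le _) fun h => ?_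
      obtain ⟨a, ha⟩ := exists_ne (1 : alternatingGroup (Fin 5))
      obtain ⟨m, rfl⟩ := hfs a
      apply ha
      have : (m : G) ∈ f.ker.map M.subtype := by rw [h]; exact m.2
      obtain ⟨k, hk, hkm⟩ := this
      rw [← show k = m from Subtype.ext hkm]
      exact hk
    rw [Subgroup.map_eq_bot_iff_of_injective _ M.subtype_injective, MonoidHom.ker_eq_bot_iff] at hk1
    exact ⟨MulEquiv.ofBijective f ⟨hk1, hfs⟩⟩

theorem x_min (W : Subgroup G) (hW : W.Normal) (hW1 : W ≠ ⊥) : ∃ M : Subgroup G, M.Normal ∧ M ≤ W ∧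
    M ≠ ⊥ ∧ ∀ V : Subgroup G, V.Normal → V ≤ M → V ≠ M → V = ⊥ := by
  obtain ⟨M, hM⟩ := Set.Finite.exists_minimal (s := {M : Subgroup G | M.Normal ∧ M ≤ W ∧ M ≠ ⊥})
    (Set.toFinite _) ⟨W, hW, le_rfl, hW1⟩
  obtain ⟨⟨h1, h2, h3⟩, hm⟩ := hM
  refine ⟨M, h1, h2, h3, fun V hV hVM hne => ?_⟩
  by_contra h
  exact hne (le_antisymm hVM (hm ⟨hV, hVM.trans h2, h⟩ hVM))

theorem x_S2 [Nontrivial G] (hPS : xPS G) (h15 : ¬ ∃ x : G, orderOf x = 15)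
    (hab : ∀ V : Subgroup G, V.Normal → (∀ x ∈ V, ∀ y ∈ V, x * y = y * x) → V = ⊥) :
    ∃ φ : G →* Equiv.Perm (Fin 5), alternatingGroup (Fin 5) ≤ φ.range ∧ Function.Injective φ := by
  obtain ⟨M, hMn, -, hM1, hmin⟩ := x_min (⊤ : Subgroup G) inferInstance top_ne_bot
  obtain ⟨e⟩ := x_S1 hPS h15 hab M hM1 hmin
  let ψ : G →* Equiv.Perm (Fin 5) :=
    (xAut.symm.toMonoidHom.comp (MulAut.congr e).toMonoidHom).comp (MulAut.conjNormal : G →* MulAut M)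
  have hψ : ∀ g, xAut (ψ g) = MulAut.congr e (MulAut.conjNormal g) := fun g => by
    change xAut (xAut.symm _) = _
    rw [MulEquiv.apply_symm_apply]; rfl
  refine ⟨ψ, ?_, ?_⟩
  · intro a ha
    refine ⟨(e.symm ⟨a, ha⟩ : M), ?_⟩
    apply xAut.injective
    rw [hψ, xAut_apply]
    ext1 b
    change e (MulAut.conjNormal (e.symm ⟨a, ha⟩ : G) (e.symm b)) = _
    have : (MulAut.conjNormal (e.symm ⟨a, ha⟩ : G) (e.symm b) : M) =
        e.symm ⟨a, ha⟩ * e.symm b * (e.symm ⟨a, ha⟩)⁻¹ := Subtype.ext (by simp [MulAut.conjNormal_apply])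
    rw [this]
    apply Subtype.ext
    simp [MulAut.conjNormal_apply]
  · rw [← MonoidHom.ker_eq_bot_iff]
    by_contra hk
    obtain ⟨M2, hM2n, hle, hM21, hmin2⟩ := x_min ψ.ker inferInstance hk
    obtain ⟨e2⟩ := x_S1 hPS h15 hab M2 hM21 hmin2
    let x : M := e.symm ⟨_, xC5_mem⟩
    let y : M2 := e2.symm ⟨_, xB3_mem⟩
    have ox : orderOf (x : G) = 5 := by
      rw [Subgroup.orderOf_coe, MulEquiv.orderOf_eq, ← Subgroup.orderOf_coe]; exact x_ord5
    have oy : orderOf (y : G) = 3 := by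
      rw [Subgroup.orderOf_coe, MulEquiv.orderOf_eq, ← Subgroup.orderOf_coe]; exact x_ord3
    have hy : ψ y = 1 := hle y.2
    have h1 := hψ y
    rw [hy, map_one] at h1
    have h2 : MulAut.conjNormal (y : G) = (1 : MulAut M) := by
      apply (MulAut.congr e).injective
      rw [← h1, map_one]
    have h3 : (y : G) * x * (y : G)⁻¹ = x := by
      rw [← MulAut.conjNormal_apply, h2]; rfl
    refine h15 (x_comm_order (x := (y : G)) (y := x) Nat.prime_three Nat.prime_five (by norm_num)
      (by rw [oy]) (by rw [ox]) (mul_inv_eq_iff_eq_mul.1 h3))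

theorem x_S : ∀ (n : ℕ) (G : Type u) [Group G] [Finite G], Nat.card G = n → xPS G →
    (¬ ∃ x : G, orderOf x = 15) → Group.IsSolvable G ∨ ∃ φ : G →* Equiv.Perm (Fin 5),
      alternatingGroup (Fin 5) ≤ φ.range ∧ Group.IsSolvable φ.ker := by
  intro n
  induction n using Nat.strong_induction_on with
  | _ n ih =>
  intro G _ _ hn hPS h15
  by_cases hV : ∃ V : Subgroup G, V.Normal ∧ (∀ x ∈ V, ∀ y ∈ V, x * y = y * x) ∧ V ≠ ⊥
  · obtain ⟨V, hVn, hVc, hV1⟩ := hV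
    have hVs : Group.IsSolvable V := Group.isSolvable_of_comm fun a b =>
      Subtype.ext (hVc a a.2 b b.2)
    rcases ih _ (hn ▸ x_quot_lt hV1) (G ⧸ V) rfl (x_PS_quot hPS V) (x_quot h15) with h | ⟨φ, h1, h2⟩
    · left
      refine Group.isSolvable_of_ker_le_range V.subtype (QuotientGroup.mk' V) ?_
      simp
    · right
      refine ⟨φ.comp (QuotientGroup.mk' V), ?_, ?_⟩
      · rw [MonoidHom.range_comp, MonoidHom.range_eq_top.2 (QuotientGroup.mk'_surjective V),
          ← MonoidHom.range_eq_map]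
        exact h1
      · let K := (φ.comp (QuotientGroup.mk' V)).ker
        have hVK : V ≤ K := by
          intro v hv
          change φ ((v : G) : G ⧸ V) = 1
          rw [(QuotientGroup.eq_one_iff v).2 hv, map_one]
        let θ : K →* φ.ker := ((QuotientGroup.mk' V).comp K.subtype).codRestrict φ.ker fun k => k.2
        refine Group.isSolvable_of_ker_le_range (Subgroup.inclusion hVK) θ ?_
        intro k hk
        have : ((k : G) : G ⧸ V) = 1 := congrArg Subtype.val hk
        exact ⟨⟨k, (QuotientGroup.eq_one_iff _).1 this⟩, rfl⟩
  · push Not at hV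
    rcases subsingleton_or_nontrivial G with h | h
    · left; exact Group.isSolvable_of_comm fun a b => Subsingleton.elim _ _
    · right
      obtain ⟨φ, h1, h2⟩ := x_S2 hPS h15 hV
      refine ⟨φ, h1, ?_⟩
      rw [(MonoidHom.ker_eq_bot_iff φ).2 h2]
      exact Group.isSolvable_of_comm fun a b => Subsingleton.elim _ _

end Part2

/-- In a pseudo-solvable group whose prime-graph complement has a triangle `{p,3,5}`
with `p ∉ {2,3,5}`, the edge `3 - r` of the complement implies the edge `5 - r`:
if `G` has no element of order `3r` then it has no element of order `5r`. -/
theorem edge3r_implies_edge5r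
    (G : Type*) [Group G] [Finite G] (hG : IsPseudoSolvable G)
    (p : ℕ) (hp : p.Prime) (hp' : p ∉ ({2, 3, 5} : Set ℕ))
    (hpd : p ∣ Nat.card G) (h3d : 3 ∣ Nat.card G) (h5d : 5 ∣ Nat.card G)
    (h3p : ¬ ∃ g : G, orderOf g = 3 * p)
    (h5p : ¬ ∃ g : G, orderOf g = 5 * p)
    (h15 : ¬ ∃ g : G, orderOf g = 15)
    (r : ℕ) (hr : r.Prime) (hrd : r ∣ Nat.card G) (hr' : r ∉ ({3, 5} : Set ℕ))
    (h3r : ¬ ∃ g : G, orderOf g = 3 * r) :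
    ¬ ∃ g : G, orderOf g = 5 * r := by
  have p2 : p ≠ 2 := fun h => hp' (by simp [h])
  have p3 : p ≠ 3 := fun h => hp' (by simp [h])
  have p5 : p ≠ 5 := fun h => hp' (by simp [h])
  have r3 : r ≠ 3 := fun h => hr' (by simp [h])
  have r5 : r ≠ 5 := fun h => hr' (by simp [h])
  rcases x_S _ G rfl (x_PS_of hG) h15 with h | ⟨φ, h1, h2⟩
  · exact (x_luc Nat.prime_three Nat.prime_five hp (by norm_num) p3.symm p5.symm _ G rfl h h3d h5d hpd
      h15 h3p h5p).elim
  · obtain ⟨c3, c5⟩ := x_A hp p2 p3 p5 _ G rfl φ h1 h2 hpd h3p h5p h15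
    exact x_B hr r3 r5 _ G rfl φ h1 h2 c3 c5 h3r
end

section
/- Let G be a finite group and N a normal subgroup of G that is a 2-group, such that G/N is isomorphic to the alternating group A₅. If a Sylow 2-subgroup of G is a generalized quaternion group (i.e., isomorphic to the dicyclic group QuaternionGroup 2ᵏ of order 2^{k+2} for some k ≥ 1), then |N| = 2 and G is isomorphic to SL(2,5). -/
namespace GQ
abbrev A5 := alternatingGroup (Fin 5)
abbrev F5 := ZMod 5
abbrev SL25 := Matrix.SpecialLinearGroup (Fin 2) (ZMod 5)

def col (v : F5 × F5 × F5) : F5 := if v.2.1 = 0 then 3 * v.1 * v.2.2 ^ 3 else v.2.1 * v.1 ^ 3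
def rep (i : F5) : F5 × F5 × F5 := if i = 0 then (0, 1, 4) else (1, i, 3 * i ^ 3)
def nrm (v : F5 × F5 × F5) : F5 := - v.1 ^ 2 - v.2.1 * v.2.2
def act (p q r s : F5) (v : F5 × F5 × F5) : F5 × F5 × F5 :=
  ((p * v.1 + q * v.2.2) * s - (p * v.2.1 - q * v.1) * r,
   -(p * v.1 + q * v.2.2) * q + (p * v.2.1 - q * v.1) * p,
   (r * v.1 + s * v.2.2) * s - (r * v.2.1 - s * v.1) * r)
def Rel (v w : F5 × F5 × F5) : Prop :=
  v = w ∨ v = -w ∨ 2 * v.1 * w.1 + v.2.1 * w.2.2 + v.2.2 * w.2.1 = 0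

lemma nrm_rep : ∀ i, nrm (rep i) = 1 := by decide +kernel
lemma col_rep : ∀ i, col (rep i) = i := by decide +kernel
lemma col_iff : ∀ a b c : F5, nrm (a, b, c) = 1 → ∀ a' b' c' : F5, nrm (a', b', c') = 1 →
    (col (a, b, c) = col (a', b', c') ↔ Rel (a, b, c) (a', b', c')) := by
  unfold Rel
  decide +kernel
lemma nrm_act (p q r s : F5) (h : p * s - q * r = 1) (v) : nrm (act p q r s v) = nrm v := by
  obtain ⟨a, b, c⟩ := v
  simp only [nrm, act]
  linear_combination ((-a ^ 2 - b * c) * (p * s - q * r + 1)) * h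
lemma rel_act (p q r s : F5) (h : p * s - q * r = 1) (v w) (hr : Rel v w) :
    Rel (act p q r s v) (act p q r s w) := by
  obtain ⟨a, b, c⟩ := v
  obtain ⟨a', b', c'⟩ := w
  rcases hr with hr | hr | hr
  · left; rw [hr]
  · right; left
    simp only [Prod.neg_mk, Prod.mk.injEq] at hr
    obtain ⟨rfl, rfl, rfl⟩ := hr
    simp only [act, Prod.neg_mk, Prod.mk.injEq]
    refine ⟨?_, ?_, ?_⟩ <;> ring
  · right; right
    simp only [act] at *
    linear_combination (p * s - q * r)^2 * hr
lemma act_act (p q r s p' q' r' s' : F5) (v) : act p q r s (act p' q' r' s' v) =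
    act (p * p' + q * r') (p * q' + q * s') (r * p' + s * r') (r * q' + s * s') v := by
  obtain ⟨a, b, c⟩ := v
  simp only [act, Prod.mk.injEq]
  refine ⟨?_, ?_, ?_⟩ <;> ring
lemma act_one : ∀ i, col (act 1 0 0 1 (rep i)) = i := by decide +kernel
lemma ker_dec : ∀ p q r s : F5, p * s - q * r = 1 → (∀ i, col (act p q r s (rep i)) = i) →
    q = 0 ∧ r = 0 ∧ p = s ∧ (p = 1 ∨ p = -1) := by decide +kernel
lemma col_act (p q r s : F5) (h : p * s - q * r = 1) (v) (hv : nrm v = 1) :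
    col (act p q r s (rep (col v))) = col (act p q r s v) := by
  have h1 := nrm_act p q r s h (rep (col v))
  have h2 := nrm_act p q r s h v
  rw [nrm_rep] at h1
  rw [hv] at h2
  refine (col_iff _ _ _ h1 _ _ _ h2).2 ?_
  apply rel_act _ _ _ _ h
  refine (col_iff _ _ _ (nrm_rep _) _ _ _ hv).1 (col_rep _)

lemma det_eq (g : SL25) : g.1 0 0 * g.1 1 1 - g.1 0 1 * g.1 1 0 = 1 := by
  rw [← Matrix.det_fin_two]; exact g.2

def endHom : SL25 →* Function.End F5 where
  toFun g := fun i => col (act (g.1 0 0) (g.1 0 1) (g.1 1 0) (g.1 1 1) (rep i))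
  map_one' := by
    funext i
    change col (act _ _ _ _ (rep i)) = i
    simpa using act_one i
  map_mul' g h := by
    funext i
    change _ = col (act _ _ _ _ (rep (col (act _ _ _ _ _))))
    rw [col_act _ _ _ _ (det_eq g) _ (by rw [nrm_act _ _ _ _ (det_eq h), nrm_rep]), act_act]
    simp [Matrix.mul_apply, Fin.sum_univ_two]

def permHom : SL25 →* Equiv.Perm (Fin 5) := endHom.toHomPerm

lemma mem_ker (g : SL25) : g ∈ permHom.ker ↔ g = 1 ∨ g = -1 := by
  constructor
  · intro hg
    rw [MonoidHom.mem_ker] at hg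
    have h := ker_dec _ _ _ _ (det_eq g) (fun i => DFunLike.congr_fun hg i)
    obtain ⟨h1, h2, h3, h4 | h4⟩ := h
    · left; ext i j; fin_cases i <;> fin_cases j <;> simp_all
    · right; ext i j; fin_cases i <;> fin_cases j <;> simp_all
  · rintro (rfl | rfl)
    · exact one_mem _
    · rw [MonoidHom.mem_ker]
      ext i : 1
      exact (by decide +kernel : ∀ i, col (act (-1) (-0) (-0) (-1) (rep i)) = i) i

lemma neg_ne : (-1 : SL25) ≠ 1 := by
  intro h
  have := congrArg (fun g : SL25 => g.1 0 0) h
  revert this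
  simp
  decide

lemma card_ker : Nat.card permHom.ker = 2 := by
  have : (permHom.ker : Set SL25) = {1, -1} := by
    ext g; simp only [SetLike.mem_coe, mem_ker]; simp
  change Nat.card (permHom.ker : Set SL25) = 2
  rw [this, Nat.card_coe_set_eq, Set.ncard_pair neg_ne.symm]

def slEquiv : SL25 ≃ {v : F5 × F5 × F5 × F5 // v.1 * v.2.2.2 - v.2.1 * v.2.2.1 = 1} where
  toFun g := ⟨(g.1 0 0, g.1 0 1, g.1 1 0, g.1 1 1), det_eq g⟩
  invFun v := ⟨!![v.1.1, v.1.2.1; v.1.2.2.1, v.1.2.2.2], by rw [Matrix.det_fin_two]; exact v.2⟩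
  left_inv g := by ext i j; fin_cases i <;> fin_cases j <;> rfl
  right_inv v := rfl

lemma card_sl : Nat.card SL25 = 120 := by
  rw [Nat.card_congr slEquiv, Nat.card_eq_fintype_card]
  decide +kernel

lemma range_eq : permHom.range = A5 := by
  apply Equiv.Perm.eq_alternatingGroup_of_index_eq_two
  have h1 := permHom.ker.card_mul_index
  rw [Subgroup.index_ker, card_ker, card_sl] at h1
  have h2 := permHom.range.card_mul_index
  rw [Nat.card_eq_fintype_card (α := Equiv.Perm (Fin 5)), Fintype.card_perm, Fintype.card_fin] at h2
  have h3 : Nat.card permHom.range = 60 := by omega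
  rw [h3] at h2
  simp [Nat.factorial] at h2
  omega

def slHom : SL25 →* A5 := permHom.codRestrict _ (fun g => by rw [← range_eq]; exact ⟨g, rfl⟩)

lemma slHom_ker : slHom.ker = permHom.ker := by
  exact MonoidHom.ker_codRestrict _ _ _
lemma slHom_surj : Function.Surjective slHom := by
  rintro ⟨x, hx⟩
  rw [← range_eq] at hx
  obtain ⟨g, hg⟩ := hx
  exact ⟨g, Subtype.ext hg⟩

lemma sq_dec : ∀ p q r s : F5, p * s - q * r = 1 → p * p + q * r = 1 → p * q + q * s = 0 →
    r * p + s * r = 0 → r * q + s * s = 1 → 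
    q = 0 ∧ r = 0 ∧ p = s ∧ (p = 1 ∨ p = -1) := by decide +kernel

lemma sl_sq (g : SL25) (hg : g ^ 2 = 1) : slHom g = 1 := by
  rw [← MonoidHom.mem_ker, slHom_ker, mem_ker]
  have e (i j) : (g ^ 2).1 i j = (1 : SL25).1 i j := by rw [hg]
  simp only [pow_two, Matrix.SpecialLinearGroup.coe_mul, Matrix.mul_apply, Fin.sum_univ_two] at e
  have h := sq_dec _ _ _ _ (det_eq g) (by simpa using e 0 0) (by simpa using e 0 1)
    (by simpa using e 1 0) (by simpa using e 1 1)
  obtain ⟨h1, h2, h3, h4 | h4⟩ := h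
  · left; ext i j; fin_cases i <;> fin_cases j <;> simp_all
  · right; ext i j; fin_cases i <;> fin_cases j <;> simp_all

lemma a5_four : ∀ a : A5, a ^ 4 = 1 → a ^ 2 = 1 := by decide +kernel

lemma card_a5 : Nat.card A5 = 60 := by
  rw [Nat.card_eq_fintype_card]; decide +kernel

lemma a5_sq (a : A5) (n : ℕ) (h : a ^ (2 ^ n) = 1) : a ^ 2 = 1 := by
  apply a5_four
  have h1 := orderOf_dvd_of_pow_eq_one h
  obtain ⟨m, -, hm⟩ := (Nat.dvd_prime_pow Nat.prime_two).1 h1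
  have h2 : orderOf a ∣ 60 := card_a5 ▸ orderOf_dvd_natCard a
  apply orderOf_dvd_iff_pow_eq_one.1
  rw [hm] at h2 ⊢
  have : m ≤ 2 := by
    by_contra hc
    have : 2 ^ 3 ∣ 60 := (pow_dvd_pow 2 (by omega)).trans h2
    omega
  exact (pow_dvd_pow 2 this : 2 ^ m ∣ 2 ^ 2)

lemma perfect_lift {G M : Type*} [Group G] [CommGroup M] (π : G →* A5)
    (hπ : Function.Surjective π) (φ : G →* M) (a : A5) : ∃ g, φ g = 1 ∧ π g = a := by
  have h : Subgroup.map π (commutator G) = ⊤ := by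
    rw [commutator_def, Subgroup.map_commutator, Subgroup.map_top_of_surjective _ hπ,
      ← commutator_def]
    exact commutator_alternatingGroup_eq_top (by simp)
  have ha : a ∈ Subgroup.map π (commutator G) := by rw [h]; trivial
  obtain ⟨g, hg, rfl⟩ := ha
  exact ⟨g, Abelianization.commutator_subset_ker φ hg, rfl⟩

universe u
lemma exists_transfer {F : Type u} [Group F] [Finite F] (c : F) (hc : ∀ g, g * c = c * g)
    (hc1 : c ≠ 1) (hc2 : c ^ 2 = 1) (hP : ∀ (g : F) (n : ℕ), g ^ (2 ^ n) = 1 → g ^ 2 = 1) :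
    ∃ (M : Type u) (_ : CommGroup M) (τ : F →* M), τ c ≠ 1 := by
  obtain ⟨P⟩ : Nonempty (Sylow 2 F) := inferInstance
  have hsq : ∀ x : (P : Subgroup F), x * x = 1 := by
    intro x
    obtain ⟨n, hn⟩ := P.2 x
    have := hP x.1 n (by simpa using congrArg Subtype.val hn)
    ext
    simpa [pow_two] using this
  letI inst : CommGroup (P : Subgroup F) := { (inferInstance : Group (P : Subgroup F)) with
   mul_comm := fun x y => by
    have h1 := hsq x
    have h2 := hsq y
    have h3 := hsq (x * y)
    have e1 : x⁻¹ = x := inv_eq_of_mul_eq_one_left h1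
    have e2 : y⁻¹ = y := inv_eq_of_mul_eq_one_left h2
    have e3 : (x * y)⁻¹ = x * y := inv_eq_of_mul_eq_one_left h3
    rw [mul_inv_rev, e1, e2] at e3
    exact e3.symm }
  refine ⟨(P : Subgroup F), inst, MonoidHom.transfer (MonoidHom.id (P : Subgroup F)), ?_⟩
  have key : ∀ (k : ℕ) (g₀ : F), g₀⁻¹ * c ^ k * g₀ ∈ (P : Subgroup F) →
      g₀⁻¹ * c ^ k * g₀ = c ^ k := by
    intro k g _
    have : Commute g c := hc g
    rw [mul_assoc, ← (this.pow_right k).eq, inv_mul_cancel_left]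
  rw [MonoidHom.transfer_eq_pow _ c key]
  intro h
  have h' : c ^ (P : Subgroup F).index = 1 := congrArg Subtype.val h
  have hodd : Odd (P : Subgroup F).index := by
    rw [← Nat.not_even_iff_odd, even_iff_two_dvd]
    exact P.not_dvd_index
  obtain ⟨m, hm⟩ := hodd
  rw [hm, pow_succ, pow_mul, hc2, one_pow, one_mul] at h'
  exact hc1 h'

structure Good {G : Type*} [Group G] (π : G →* A5) (z : G) : Prop where
  surj : Function.Surjective π
  ne : z ≠ 1
  ker : ∀ x, π x = 1 ↔ x = 1 ∨ x = z
  inv : ∀ x, x ^ 2 = 1 → π x = 1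

namespace Good
variable {G : Type*} [Group G] {π : G →* A5} {z : G}
lemma map_z (h : Good π z) : π z = 1 := (h.ker z).2 (Or.inr rfl)
lemma zz (h : Good π z) : z * z = 1 := by
  rcases (h.ker (z * z)).1 (by simp [h.map_z]) with e | e
  · exact e
  · exact absurd (by simpa using e) h.ne
lemma central (h : Good π z) (g : G) : g * z = z * g := by
  rcases (h.ker (g * z * g⁻¹)).1 (by simp [h.map_z]) with e | e
  · exact absurd (by simpa using e) h.ne
  · exact mul_inv_eq_iff_eq_mul.1 e
lemma sq1 (h : Good π z) {x : G} (hx : π x = 1) : x * x = 1 := by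
  rcases (h.ker x).1 hx with rfl | rfl
  · simp
  · exact h.zz
lemma sq2 (h : Good π z) {x : G} (hx : π x ≠ 1) (hx2 : π x ^ 2 = 1) : x * x = z := by
  rcases (h.ker (x ^ 2)).1 (by simpa using hx2) with e | e
  · exact absurd (h.inv x e) hx
  · rw [← pow_two, e]
end Good

theorem key {G₁ G₂ : Type*} [Group G₁] [Group G₂] [Finite G₁] [Finite G₂]
    {π₁ : G₁ →* A5} {π₂ : G₂ →* A5} {z₁ : G₁} {z₂ : G₂} (h₁ : Good π₁ z₁) (h₂ : Good π₂ z₂) :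
    Nonempty (G₁ ≃* G₂) := by
  let F₀ : Subgroup (G₁ × G₂) :=
    (π₁.comp (MonoidHom.fst G₁ G₂)).eqLocus (π₂.comp (MonoidHom.snd G₁ G₂))
  have hF (x : G₁ × G₂) : x ∈ F₀ ↔ π₁ x.1 = π₂ x.2 := Iff.rfl
  let d : F₀ := ⟨(z₁, z₂), by rw [hF, h₁.map_z, h₂.map_z]⟩
  have hdc : ∀ g : F₀, g * d = d * g := fun g =>
    Subtype.ext (Prod.ext (h₁.central _) (h₂.central _))
  have hdd : d * d = 1 := Subtype.ext (Prod.ext h₁.zz h₂.zz)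
  let D : Subgroup F₀ :=
    { carrier := {x | x = 1 ∨ x = d}
      one_mem' := Or.inl rfl
      mul_mem' := by
        rintro a b (rfl | rfl) (rfl | rfl) <;> simp [hdd]
      inv_mem' := by
        rintro a (rfl | rfl)
        · simp
        · right; exact inv_eq_of_mul_eq_one_left hdd }
  have hD (x : F₀) : x ∈ D ↔ x = 1 ∨ x = d := Iff.rfl
  have : D.Normal := ⟨by
    rintro n (rfl | rfl) g
    · left; simp
    · right; rw [hdc, mul_inv_cancel_right]⟩
  let c₀ : F₀ := ⟨(z₁, 1), by rw [hF, h₁.map_z, map_one]⟩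
  have hcc : ∀ g : F₀, g * c₀ = c₀ * g := fun g =>
    Subtype.ext (Prod.ext (h₁.central _) (by simp [c₀]))
  obtain ⟨P, hPc, τ, hτ⟩ := exists_transfer (F := F₀ ⧸ D) (QuotientGroup.mk' D c₀)
    (by
      intro g
      obtain ⟨g, rfl⟩ := QuotientGroup.mk'_surjective D g
      rw [← map_mul, hcc, map_mul])
    (by
      intro h
      rw [← MonoidHom.mem_ker, QuotientGroup.ker_mk', hD] at h
      rcases h with h | h
      · exact h₁.ne (congrArg (fun x : F₀ => x.1.1) h)
      · exact h₂.ne (congrArg (fun x : F₀ => x.1.2) h).symm)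
    (by
      rw [← map_pow, ← MonoidHom.mem_ker, QuotientGroup.ker_mk', hD]
      left
      exact Subtype.ext (Prod.ext (by simpa [c₀, pow_two] using h₁.zz) (by simp [c₀])))
    (by
      intro g n hg
      obtain ⟨g, rfl⟩ := QuotientGroup.mk'_surjective D g
      rw [← map_pow, ← MonoidHom.mem_ker, QuotientGroup.ker_mk'] at hg ⊢
      obtain ⟨⟨x, y⟩, hxy⟩ := g
      have hxy' : π₁ x = π₂ y := hxy
      have hx : π₁ x ^ 2 = 1 := by
        apply a5_sq _ n
        rw [← map_pow]
        rcases (hD _).1 hg with h | h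
        · have := congrArg (fun x : F₀ => x.1.1) h
          simp only [SubmonoidClass.coe_pow] at this
          exact (congrArg π₁ this).trans (map_one _)
        · have := congrArg (fun x : F₀ => x.1.1) h
          simp only [SubmonoidClass.coe_pow] at this
          exact (congrArg π₁ this).trans h₁.map_z
      rw [pow_two]
      by_cases h1 : π₁ x = 1
      · left
        exact Subtype.ext (Prod.ext (h₁.sq1 h1) (h₂.sq1 (hxy' ▸ h1)))
      · right
        exact Subtype.ext (Prod.ext (h₁.sq2 h1 hx) (h₂.sq2 (hxy' ▸ h1) (hxy' ▸ hx))))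
  let σ : F₀ →* P := τ.comp (QuotientGroup.mk' D)
  have hσd : σ d = 1 := by
    have : QuotientGroup.mk' D d = 1 := by
      rw [← MonoidHom.mem_ker, QuotientGroup.ker_mk']; exact Or.inr rfl
    simp only [σ, MonoidHom.comp_apply, this, map_one]
  have hσc : σ c₀ ≠ 1 := hτ
  let K : Subgroup F₀ := σ.ker
  let p₁ : K →* G₁ := (MonoidHom.fst G₁ G₂).comp (F₀.subtype.comp K.subtype)
  let p₂ : K →* G₂ := (MonoidHom.snd G₁ G₂).comp (F₀.subtype.comp K.subtype)
  let π : F₀ →* A5 := π₁.comp ((MonoidHom.fst G₁ G₂).comp F₀.subtype)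
  have hπ : Function.Surjective π := by
    intro a
    obtain ⟨x, rfl⟩ := h₁.surj a
    obtain ⟨y, hy⟩ := h₂.surj (π₁ x)
    exact ⟨⟨(x, y), hy.symm⟩, rfl⟩
  have lift (a : A5) : ∃ g : F₀, σ g = 1 ∧ π g = a := perfect_lift π hπ σ a
  have s₁ : Function.Surjective p₁ := by
    intro x
    obtain ⟨g, hg, hgx⟩ := lift (π₁ x)
    have hgx' : π₁ g.1.1 = π₁ x := hgx
    rcases (h₁.ker (x * g.1.1⁻¹)).1 (by simp [hgx']) with e | e
    · exact ⟨⟨g, hg⟩, (mul_inv_eq_one.1 e).symm⟩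
    · exact ⟨⟨d * g, by rw [MonoidHom.mem_ker, map_mul, hσd, hg, one_mul]⟩,
        (mul_inv_eq_iff_eq_mul.1 e).symm⟩
  have s₂ : Function.Surjective p₂ := by
    intro x
    obtain ⟨g, hg, hgx⟩ := lift (π₂ x)
    have hgx' : π₂ g.1.2 = π₂ x := g.2.symm.trans hgx
    rcases (h₂.ker (x * g.1.2⁻¹)).1 (by simp [hgx']) with e | e
    · exact ⟨⟨g, hg⟩, (mul_inv_eq_one.1 e).symm⟩
    · exact ⟨⟨d * g, by rw [MonoidHom.mem_ker, map_mul, hσd, hg, one_mul]⟩,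
        (mul_inv_eq_iff_eq_mul.1 e).symm⟩
  have i₁ : Function.Injective p₁ := by
    rw [injective_iff_map_eq_one]
    rintro ⟨⟨⟨x, y⟩, hxy⟩, hk⟩ h
    obtain rfl : x = 1 := h
    have hy : π₂ y = 1 := by rw [← (hF _).1 hxy]; simp
    rcases (h₂.ker y).1 hy with rfl | rfl
    · rfl
    · exfalso
      apply hσc
      have : c₀ = d * ⟨(1, y), hxy⟩ := Subtype.ext (Prod.ext (by simp [c₀, d]) h₂.zz.symm)
      rw [this, map_mul, hσd, one_mul]
      exact hk
  have i₂ : Function.Injective p₂ := by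
    rw [injective_iff_map_eq_one]
    rintro ⟨⟨⟨x, y⟩, hxy⟩, hk⟩ h
    obtain rfl : y = 1 := h
    have hx : π₁ x = 1 := by rw [(hF _).1 hxy]; simp
    rcases (h₁.ker x).1 hx with rfl | rfl
    · rfl
    · exact absurd hk hσc
  exact ⟨(MulEquiv.ofBijective p₁ ⟨i₁, s₁⟩).symm.trans (MulEquiv.ofBijective p₂ ⟨i₂, s₂⟩)⟩

lemma good_sl : Good slHom (-1) where
  surj := slHom_surj
  ne := neg_ne
  ker x := by rw [← MonoidHom.mem_ker, slHom_ker, mem_ker]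
  inv := sl_sq



lemma quat_dec : ∀ q : QuaternionGroup (2 ^ 1), q ^ 2 = 1 →
    q = 1 ∨ q = QuaternionGroup.a (2 : ZMod (2 * 2 ^ 1)) := by
  rintro (i | i)
  · revert i; decide +kernel
  · revert i; decide +kernel

end GQ

open GQ

theorem generalized_quaternion_sylow_SL25
    (G : Type*) [Group G] [Finite G]
    (N : Subgroup G) (hNn : N.Normal) (hN2 : IsPGroup 2 N)
    (hquot : haveI := hNn
      Nonempty ((G ⧸ N) ≃* alternatingGroup (Fin 5)))
    (P : Sylow 2 G) (k : ℕ) (hk : 1 ≤ k)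
    (hP : Nonempty ((P : Subgroup G) ≃* QuaternionGroup (2 ^ k))) :
    Nat.card N = 2 ∧
      Nonempty (G ≃* Matrix.SpecialLinearGroup (Fin 2) (ZMod 5)) := by
  obtain ⟨f⟩ := hquot
  obtain ⟨e⟩ := hP
  let π : G →* A5 := f.toMonoidHom.comp (QuotientGroup.mk' N)
  have hker (g : G) : π g = 1 ↔ g ∈ N := by
    change f (QuotientGroup.mk' N g) = 1 ↔ _
    rw [map_eq_one_iff f f.injective, ← MonoidHom.mem_ker, QuotientGroup.ker_mk']
  have hsurj : Function.Surjective π :=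
    f.surjective.comp (QuotientGroup.mk'_surjective N)
  have hNP : N ≤ P := hN2.le_sylow_of_normal P
  have hsqN : ∀ g : (P : Subgroup G), (g : G) ^ 2 ∈ N := by
    intro g
    obtain ⟨n, hn⟩ := P.2 g
    rw [← hker, map_pow]
    apply a5_sq _ n
    rw [← map_pow]
    have : (g : G) ^ 2 ^ n = 1 := by simpa using congrArg Subtype.val hn
    rw [this, map_one]
  -- cardinality
  have hcardP : Nat.card (P : Subgroup G) = 4 * 2 ^ k := by
    rw [Nat.card_congr e.toEquiv, Nat.card_eq_fintype_card, QuaternionGroup.card]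
  have hcardN : Nat.card N = 2 ^ k := by
    obtain ⟨j, hj⟩ := IsPGroup.iff_card.1 hN2
    have h1 := N.card_mul_index
    have h2 : N.index = 60 := by
      rw [Subgroup.index_eq_card, Nat.card_congr f.toEquiv]; exact card_a5
    have h3 := (P : Subgroup G).card_mul_index
    have h4 : ¬ 2 ∣ (P : Subgroup G).index := P.not_dvd_index
    rw [hcardP, ← h1, h2, hj] at h3
    rw [hj]
    congr 1
    rcases lt_trichotomy j k with h | h | h
    · exfalso
      obtain ⟨t, rfl⟩ := Nat.exists_eq_add_of_lt h
      rw [pow_succ, pow_add] at h3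
      have : 2 ^ j * (2 * (2 ^ t * (P : Subgroup G).index)) = 2 ^ j * 15 := by linarith
      have := Nat.eq_of_mul_eq_mul_left (by positivity) this
      omega
    · exact h
    · exfalso
      obtain ⟨t, rfl⟩ := Nat.exists_eq_add_of_lt h
      rw [pow_succ, pow_add] at h3
      have : 2 ^ k * ((P : Subgroup G).index) = 2 ^ k * (2 * (2 ^ t * 15)) := by linarith
      have := Nat.eq_of_mul_eq_mul_left (by positivity) this
      exact h4 ⟨_, this⟩
  let A : (P : Subgroup G) := e.symm (QuaternionGroup.a 1)
  have hA : orderOf A = 2 * 2 ^ k := by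
    rw [MulEquiv.orderOf_eq, QuaternionGroup.orderOf_a_one]
  let B : N := ⟨(A : G) ^ 2, hsqN A⟩
  have hB : orderOf B = Nat.card N := by
    rw [hcardN, ← Subgroup.orderOf_coe, orderOf_pow, Subgroup.orderOf_coe, hA]
    simp
  have hcyc : IsCyclic N := isCyclic_of_orderOf_eq_card B hB
  have hcent : ∀ g : G, ∀ n ∈ N, g * n = n * g := by
    intro g n hn
    obtain ⟨h, hh, hg⟩ := perfect_lift π hsurj
      ((IsCyclic.mulAutMulEquiv N).toMonoidHom.comp MulAut.conjNormal) (π g)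
    have hh' : (MulAut.conjNormal h : MulAut N) = 1 := by
      apply (IsCyclic.mulAutMulEquiv N).injective
      rw [map_one]; exact hh
    have h1 : h * n * h⁻¹ = n := by
      have := congrArg (fun φ : MulAut N => ((φ ⟨n, hn⟩ : N) : G)) hh'
      simpa using this
    have h2 : h⁻¹ * g ∈ N := by rw [← hker]; simp [hg]
    have h3 : h⁻¹ * g * n = n * (h⁻¹ * g) := by
      obtain ⟨b, hb⟩ := hcyc.exists_generator
      obtain ⟨i, hi⟩ := hb ⟨_, h2⟩
      obtain ⟨j, hj⟩ := hb ⟨n, hn⟩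
      have := ((Commute.refl b).zpow_zpow i j).eq
      simp only at hi hj
      rw [hi, hj] at this
      exact congrArg Subtype.val this
    calc g * n = h * (h⁻¹ * g * n) := by group
      _ = (h * n * h⁻¹) * g := by rw [h3]; group
      _ = n * g := by rw [h1]
  have hk1 : k = 1 := by
    let X : (P : Subgroup G) := e.symm (QuaternionGroup.xa 0)
    have h1 : X * A ^ 2 = A ^ 2 * X := Subtype.ext (hcent X _ (hsqN A))
    have h2 := congrArg e h1
    simp only [map_mul, map_pow, X, A, MulEquiv.apply_symm_apply, pow_two,
      QuaternionGroup.a_mul_a, QuaternionGroup.xa_mul_a, QuaternionGroup.a_mul_xa,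
      QuaternionGroup.xa.injEq] at h2
    have h3 : ((4 : ℕ) : ZMod (2 * 2 ^ k)) = 0 := by
      push_cast
      linear_combination h2
    rw [ZMod.natCast_eq_zero_iff] at h3
    have h4 := Nat.le_of_dvd (by norm_num) h3
    by_contra hne
    have : 2 ^ 2 ≤ 2 ^ k := Nat.pow_le_pow_right (by norm_num) (by omega)
    omega
  subst hk1
  have hN : Nat.card N = 2 := by simpa using hcardN
  refine ⟨hN, ?_⟩
  have hBo : orderOf (B : G) = 2 := by rw [Subgroup.orderOf_coe, hB, hN]
  have hB1 : (B : G) ≠ 1 := by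
    intro h; rw [h] at hBo; simp at hBo
  have heB : e ⟨(B : G), hNP B.2⟩ = QuaternionGroup.a 2 := by
    have : (⟨(B : G), hNP B.2⟩ : (P : Subgroup G)) = A ^ 2 := Subtype.ext rfl
    rw [this, map_pow]
    simp only [A, MulEquiv.apply_symm_apply, pow_two, QuaternionGroup.a_mul_a]
    congr 1
  have hmem (x : G) (hx : x ∈ P) (hx2 : x ^ 2 = 1) : x ∈ N := by
    rcases quat_dec (e ⟨x, hx⟩) (by
      rw [← map_pow, map_eq_one_iff e e.injective]; exact Subtype.ext hx2) with h | h
    · rw [map_eq_one_iff e e.injective] at h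
      have : x = 1 := congrArg Subtype.val h
      rw [this]; exact one_mem _
    · rw [← heB] at h
      have : x = B := congrArg Subtype.val (e.injective h)
      rw [this]; exact B.2
  have good : Good π (B : G) :=
    { surj := hsurj
      ne := hB1
      ker := by
        intro x
        rw [hker]
        constructor
        · intro hx
          obtain ⟨u, v, huv, hall⟩ := Nat.card_eq_two_iff.1 hN
          have key (w : N) : w = u ∨ w = v := by
            have : w ∈ ({u, v} : Set N) := by rw [hall]; trivial
            simpa using this
          have hB1' : B ≠ 1 := fun h => hB1 (congrArg Subtype.val h)
          have : (⟨x, hx⟩ : N) = 1 ∨ (⟨x, hx⟩ : N) = B := by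
            rcases key ⟨x, hx⟩ with h | h <;> rcases key 1 with h' | h' <;>
              rcases key B with h'' | h'' <;> simp_all
          rcases this with h | h
          · left; exact congrArg Subtype.val h
          · right; exact congrArg Subtype.val h
        · rintro (rfl | rfl)
          · exact one_mem _
          · exact B.2
      inv := by
        intro x hx
        rw [hker]
        have hpg : IsPGroup 2 (Subgroup.zpowers x) := by
          rintro ⟨_, ⟨i, rfl⟩⟩
          refine ⟨1, Subtype.ext ?_⟩
          change (x ^ i) ^ (2 ^ 1) = 1
          rw [pow_one, ← zpow_natCast, ← zpow_mul, mul_comm, zpow_mul, zpow_natCast, hx, one_zpow]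
        obtain ⟨Q, hQ⟩ := hpg.exists_le_sylow
        obtain ⟨g, rfl⟩ := MulAction.exists_smul_eq G P Q
        have hxQ := hQ (Subgroup.mem_zpowers x)
        have hxP : g⁻¹ * x * g ∈ P := by
          change g⁻¹ * x * g ∈ (P : Subgroup G)
          change x ∈ ((g • P : Sylow 2 G) : Subgroup G) at hxQ
          rw [Sylow.coe_subgroup_smul, Subgroup.mem_pointwise_smul_iff_inv_smul_mem] at hxQ
          simpa [MulAut.smul_def, ← map_inv] using hxQ
        have h1 := hmem _ hxP (by
          have : (g⁻¹ * x * g) ^ 2 = g⁻¹ * x ^ 2 * g := by simp only [pow_two]; group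
          rw [this, hx]; simp)
        have h2 := hNn.conj_mem _ h1 g
        have : g * (g⁻¹ * x * g) * g⁻¹ = x := by group
        rwa [this] at h2 }
  exact GQ.key good good_sl
end
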